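/- arXiv:2503.11418 — 9 statements merged into one kernel-verified Lean document; each statement's English description precedes it below -/
import Mathlib

section
/- Let X₁, X₂, X₃ be independent uniformly distributed random points on [0,1], and let ρ_T(x,y) = min(|x−y|, 1−|x−y|) be the distance on the one-dimensional unit torus. Fix 0 < r₀ < 1/3. Then: (i) the probability that all three pairwise distances ρ_T(Xᵢ,Xⱼ) are less than r₀ equals 3r₀²; (ii) the probability that ρ_T(X₁,X₂) < r₀ and ρ_T(X₁,X₃) < r₀ but ρ_T(X₂,X₃) > r₀ equals r₀²; (iii) the probability that ρ_T(X₁,X₂) < r₀ but ρ_T(X₁,X₃) > r₀ and ρ_T(X₂,X₃) > r₀ equals 2r₀ − 5r₀²; (iv) the probability that all three pairwise distances exceed r₀ equals (1−3r₀)². -/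
open MeasureTheory

/-- The distance on the one-dimensional unit torus. -/
noncomputable def rhoT (x y : ℝ) : ℝ := min |x - y| (1 - |x - y|)

/-- The unit cube `[0,1]³` as a subset of `ℝ × ℝ × ℝ`:
the law of three i.i.d. uniform points on `[0,1]` is Lebesgue measure on this cube. -/
def unitCube3 : Set (ℝ × ℝ × ℝ) :=
  Set.Icc (0:ℝ) 1 ×ˢ Set.Icc (0:ℝ) 1 ×ˢ Set.Icc (0:ℝ) 1

/-!
Identify the torus with the circle `ℝ / ℤ`, on which `rhoT` is the norm of the difference. The
differences `U = X₂ - X₁` and `V = X₃ - X₁` are independent and uniform, and the three edges of the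
graph are the events `‖U‖ < r`, `‖V‖ < r` and `‖V - U‖ < r`. Any two of `U`, `V`, `V - U` are
independent and uniform, so an edge has probability `2r` and a pair of edges `(2r)²`. When
`3r ≤ 1`, three edges never wrap around the circle, so the triangle has as its probability the area
`3r²` of the plane hexagon `|y| < r`, `|z| < r`, `|z - y| < r`. Inclusion–exclusion gives the
remaining probabilities, as the spheres `‖u‖ = r` are null.
-/

section InclusionExclusion

variable {Ω : Type*} [MeasurableSpace Ω] (μ : Measure Ω) {A B C : Set Ω}

theorem measureReal_inter_compl [IsFiniteMeasure μ] (A : Set Ω) (hB : MeasurableSet B) :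
    μ.real (A ∩ Bᶜ) = μ.real A - μ.real (A ∩ B) :=
  eq_sub_of_add_eq' (measureReal_inter_add_sdiff hB)

theorem measureReal_inter_compl_inter_compl [IsFiniteMeasure μ] (A : Set Ω)
    (hB : MeasurableSet B) (hC : MeasurableSet C) :
    μ.real (A ∩ Bᶜ ∩ Cᶜ) =
      μ.real A - μ.real (A ∩ B) - μ.real (A ∩ C) + μ.real (A ∩ B ∩ C) := by
  rw [measureReal_inter_compl μ _ hC, measureReal_inter_compl μ A hB,
    Set.inter_right_comm A Bᶜ C, measureReal_inter_compl μ _ hB, Set.inter_right_comm A C B]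
  ring

theorem probReal_compl_inter_compl_inter_compl [IsProbabilityMeasure μ]
    (hA : MeasurableSet A) (hB : MeasurableSet B) (hC : MeasurableSet C) :
    μ.real (Aᶜ ∩ Bᶜ ∩ Cᶜ) =
      1 - μ.real A - μ.real B - μ.real C + μ.real (A ∩ B) + μ.real (A ∩ C) + μ.real (B ∩ C)
        - μ.real (A ∩ B ∩ C) := by
  have complement (S : Set Ω) : μ.real (Aᶜ ∩ S) = μ.real S - μ.real (A ∩ S) := by
    rw [Set.inter_comm, measureReal_inter_compl μ S hA, Set.inter_comm]
  rw [measureReal_inter_compl_inter_compl μ _ hB hC, Set.inter_assoc, complement B, complement C,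
    complement (B ∩ C), probReal_compl_eq_one_sub hA, Set.inter_assoc]
  ring

end InclusionExclusion

section EdgeEvents

variable {G : Type*} [SeminormedAddCommGroup G] {r : ℝ}

/-- The event `‖X₂ - X₁‖ < r` that the points `X₁` and `X₂` are joined, as a set of values of the
pair of differences `(X₂ - X₁, X₃ - X₁)`. -/
def edge₁₂ (r : ℝ) : Set (G × G) := {q | ‖q.1‖ < r}

/-- The event `‖X₃ - X₁‖ < r` that the points `X₁` and `X₃` are joined, as a set of values of the
pair of differences `(X₂ - X₁, X₃ - X₁)`. -/
def edge₁₃ (r : ℝ) : Set (G × G) := {q | ‖q.2‖ < r}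

/-- The event `‖X₃ - X₂‖ < r` that the points `X₂` and `X₃` are joined, as a set of values of the
pair of differences `(X₂ - X₁, X₃ - X₁)`. -/
def edge₂₃ (r : ℝ) : Set (G × G) := {q | ‖q.2 - q.1‖ < r}

theorem edge₁₂_eq_preimage_ball : edge₁₂ r = Prod.fst ⁻¹' Metric.ball (0 : G) r := by
  ext q; simp [edge₁₂]

theorem edge₁₃_eq_preimage_ball : edge₁₃ r = Prod.snd ⁻¹' Metric.ball (0 : G) r := by
  ext q; simp [edge₁₃]

theorem edge₂₃_eq_preimage_ball :
    edge₂₃ r = (fun q : G × G ↦ q.2 - q.1) ⁻¹' Metric.ball 0 r := by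
  ext q; simp [edge₂₃]

theorem edge₁₂_inter_edge₁₃_eq_prod :
    edge₁₂ r ∩ edge₁₃ r = Metric.ball (0 : G) r ×ˢ Metric.ball (0 : G) r := by
  ext q; simp [edge₁₂, edge₁₃]

theorem edge₁₂_inter_edge₂₃_eq_preimage_prod :
    edge₁₂ r ∩ edge₂₃ r =
      (fun q : G × G ↦ (q.1, q.2 - q.1)) ⁻¹' (Metric.ball 0 r ×ˢ Metric.ball 0 r) := by
  ext q; simp [edge₁₂, edge₂₃]

theorem edge₁₃_inter_edge₂₃_eq_preimage_prod :
    edge₁₃ r ∩ edge₂₃ r =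
      (fun q : G × G ↦ (q.2, q.1 - q.2)) ⁻¹' (Metric.ball 0 r ×ˢ Metric.ball 0 r) := by
  ext q; simp [edge₁₃, edge₂₃, norm_sub_rev q.2 q.1]

variable [MeasurableSpace G] [OpensMeasurableSpace G]

theorem measurableSet_edge₁₂ : MeasurableSet (edge₁₂ r : Set (G × G)) :=
  edge₁₂_eq_preimage_ball (G := G) ▸ measurable_fst measurableSet_ball

theorem measurableSet_edge₁₃ : MeasurableSet (edge₁₃ r : Set (G × G)) :=
  edge₁₃_eq_preimage_ball (G := G) ▸ measurable_snd measurableSet_ball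

theorem measurableSet_edge₂₃ [MeasurableSub₂ G] : MeasurableSet (edge₂₃ r : Set (G × G)) :=
  edge₂₃_eq_preimage_ball (G := G) ▸ (measurable_snd.sub measurable_fst) measurableSet_ball

end EdgeEvents

section InvariantMeasure

theorem measurePreserving_sub_fst_sub_fst {G : Type*} [AddGroup G] [MeasurableSpace G]
    [MeasurableAdd₂ G] [MeasurableNeg G] (μ : Measure G) [IsProbabilityMeasure μ]
    [μ.IsAddRightInvariant] :
    MeasurePreserving (fun p : G × G × G ↦ (p.2.1 - p.1, p.2.2 - p.1))
      (μ.prod (μ.prod μ)) (μ.prod μ) := by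
  have translate (a : G) :
      MeasurePreserving (Prod.map (· - a) (· - a)) (μ.prod μ) (μ.prod μ) :=
    (measurePreserving_sub_right μ a).prod (measurePreserving_sub_right μ a)
  have shear : MeasurePreserving (fun p : G × G × G ↦ (p.1, Prod.map (· - p.1) (· - p.1) p.2))
      (μ.prod (μ.prod μ)) (μ.prod (μ.prod μ)) :=
    (MeasurePreserving.id μ).skew_product (g := fun a ↦ Prod.map (· - a) (· - a))
      (by unfold Function.uncurry Prod.map; fun_prop)
      (.of_forall fun a ↦ (translate a).map_eq)
  exact measurePreserving_snd.comp shear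

theorem measurePreserving_snd_sub_fst {G : Type*} [AddGroup G] [MeasurableSpace G]
    [MeasurableAdd₂ G] [MeasurableNeg G] (μ : Measure G) [IsProbabilityMeasure μ]
    [μ.IsAddRightInvariant] :
    MeasurePreserving (fun q : G × G ↦ q.2 - q.1) (μ.prod μ) μ :=
  measurePreserving_snd.comp (measurePreserving_prod_sub μ μ)

variable {G : Type*} [SeminormedAddCommGroup G] [MeasurableSpace G] (μ : Measure G) {r : ℝ}

theorem measureReal_edge₁₂_inter_edge₁₃ [SFinite μ] :
    (μ.prod μ).real (edge₁₂ r ∩ edge₁₃ r) = μ.real (Metric.ball 0 r) ^ 2 := by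
  rw [edge₁₂_inter_edge₁₃_eq_prod, measureReal_prod_prod, sq]

theorem setOf_lt_norm_ae_eq_compl {Ω : Type*} [MeasurableSpace Ω] {P : Measure Ω} {μ : Measure G}
    {f : Ω → G} (hf : MeasurePreserving f P μ) (hr : μ (Metric.sphere 0 r) = 0) :
    ({ω | r < ‖f ω‖} : Set Ω) =ᵐ[P] ({ω | ‖f ω‖ < r}ᶜ : Set Ω) := by
  have norm_ne : ∀ᵐ u ∂μ, ‖u‖ ≠ r := by simpa [ae_iff, Metric.sphere] using hr
  refine Filter.eventuallyEq_set.2 ?_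
  filter_upwards [hf.quasiMeasurePreserving.ae norm_ne] with ω hω
  simp [hω.symm.le_iff_lt]

variable [OpensMeasurableSpace G]

theorem measureReal_edge₁₂ [IsProbabilityMeasure μ] :
    (μ.prod μ).real (edge₁₂ r) = μ.real (Metric.ball 0 r) := by
  rw [edge₁₂_eq_preimage_ball]
  exact measurePreserving_fst.measureReal_preimage measurableSet_ball.nullMeasurableSet

theorem measureReal_edge₁₃ [IsProbabilityMeasure μ] :
    (μ.prod μ).real (edge₁₃ r) = μ.real (Metric.ball 0 r) := by
  rw [edge₁₃_eq_preimage_ball]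
  exact measurePreserving_snd.measureReal_preimage measurableSet_ball.nullMeasurableSet

variable [MeasurableAdd₂ G] [MeasurableNeg G] [μ.IsAddRightInvariant]

theorem measureReal_edge₁₂_inter_edge₂₃ [SFinite μ] :
    (μ.prod μ).real (edge₁₂ r ∩ edge₂₃ r) = μ.real (Metric.ball 0 r) ^ 2 := by
  rw [edge₁₂_inter_edge₂₃_eq_preimage_prod, (measurePreserving_prod_sub μ μ).measureReal_preimage
    (measurableSet_ball.prod measurableSet_ball).nullMeasurableSet, measureReal_prod_prod, sq]

theorem measureReal_edge₁₃_inter_edge₂₃ [SFinite μ] :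
    (μ.prod μ).real (edge₁₃ r ∩ edge₂₃ r) = μ.real (Metric.ball 0 r) ^ 2 := by
  rw [edge₁₃_inter_edge₂₃_eq_preimage_prod,
    (measurePreserving_prod_sub_swap μ μ).measureReal_preimage
      (measurableSet_ball.prod measurableSet_ball).nullMeasurableSet, measureReal_prod_prod, sq]

variable [IsProbabilityMeasure μ]

theorem measureReal_edge₂₃ : (μ.prod μ).real (edge₂₃ r) = μ.real (Metric.ball 0 r) := by
  rw [edge₂₃_eq_preimage_ball]
  exact (measurePreserving_snd_sub_fst μ).measureReal_preimage
    measurableSet_ball.nullMeasurableSet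

theorem measureReal_two_edges (hr : μ (Metric.sphere 0 r) = 0) :
    (μ.prod μ).real {q | ‖q.1‖ < r ∧ ‖q.2‖ < r ∧ r < ‖q.2 - q.1‖} =
      μ.real (Metric.ball 0 r) ^ 2 - (μ.prod μ).real (edge₁₂ r ∩ edge₁₃ r ∩ edge₂₃ r) := by
  have nonedge₂₃ := setOf_lt_norm_ae_eq_compl (measurePreserving_snd_sub_fst μ) hr
  calc (μ.prod μ).real {q | ‖q.1‖ < r ∧ ‖q.2‖ < r ∧ r < ‖q.2 - q.1‖}
      = (μ.prod μ).real (edge₁₂ r ∩ edge₁₃ r ∩ {q | r < ‖q.2 - q.1‖}) := by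
        congr 1; ext q; simp [edge₁₂, edge₁₃, and_assoc]
    _ = (μ.prod μ).real (edge₁₂ r ∩ edge₁₃ r ∩ (edge₂₃ r)ᶜ) :=
        measureReal_congr (.inter .rfl nonedge₂₃)
    _ = _ := by
        rw [measureReal_inter_compl _ _ measurableSet_edge₂₃, measureReal_edge₁₂_inter_edge₁₃]

theorem measureReal_one_edge (hr : μ (Metric.sphere 0 r) = 0) :
    (μ.prod μ).real {q | ‖q.1‖ < r ∧ r < ‖q.2‖ ∧ r < ‖q.2 - q.1‖} =
      μ.real (Metric.ball 0 r) - 2 * μ.real (Metric.ball 0 r) ^ 2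
        + (μ.prod μ).real (edge₁₂ r ∩ edge₁₃ r ∩ edge₂₃ r) := by
  have nonedge₁₃ := setOf_lt_norm_ae_eq_compl (measurePreserving_snd (μ := μ)) hr
  have nonedge₂₃ := setOf_lt_norm_ae_eq_compl (measurePreserving_snd_sub_fst μ) hr
  calc (μ.prod μ).real {q | ‖q.1‖ < r ∧ r < ‖q.2‖ ∧ r < ‖q.2 - q.1‖}
      = (μ.prod μ).real (edge₁₂ r ∩ {q | r < ‖q.2‖} ∩ {q | r < ‖q.2 - q.1‖}) := by
        congr 1; ext q; simp [edge₁₂, and_assoc]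
    _ = (μ.prod μ).real (edge₁₂ r ∩ (edge₁₃ r)ᶜ ∩ (edge₂₃ r)ᶜ) :=
        measureReal_congr (.inter (.inter .rfl nonedge₁₃) nonedge₂₃)
    _ = _ := by
        rw [measureReal_inter_compl_inter_compl _ _ measurableSet_edge₁₃ measurableSet_edge₂₃,
          measureReal_edge₁₂, measureReal_edge₁₂_inter_edge₁₃, measureReal_edge₁₂_inter_edge₂₃]
        ring

theorem measureReal_no_edge (hr : μ (Metric.sphere 0 r) = 0) :
    (μ.prod μ).real {q | r < ‖q.1‖ ∧ r < ‖q.2‖ ∧ r < ‖q.2 - q.1‖} =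
      1 - 3 * μ.real (Metric.ball 0 r) + 3 * μ.real (Metric.ball 0 r) ^ 2
        - (μ.prod μ).real (edge₁₂ r ∩ edge₁₃ r ∩ edge₂₃ r) := by
  have nonedge₁₂ := setOf_lt_norm_ae_eq_compl (measurePreserving_fst (ν := μ)) hr
  have nonedge₁₃ := setOf_lt_norm_ae_eq_compl (measurePreserving_snd (μ := μ)) hr
  have nonedge₂₃ := setOf_lt_norm_ae_eq_compl (measurePreserving_snd_sub_fst μ) hr
  calc (μ.prod μ).real {q | r < ‖q.1‖ ∧ r < ‖q.2‖ ∧ r < ‖q.2 - q.1‖}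
      = (μ.prod μ).real ({q | r < ‖q.1‖} ∩ {q | r < ‖q.2‖} ∩ {q | r < ‖q.2 - q.1‖}) := by
        congr 1; ext q; simp [and_assoc]
    _ = (μ.prod μ).real ((edge₁₂ r)ᶜ ∩ (edge₁₃ r)ᶜ ∩ (edge₂₃ r)ᶜ) :=
        measureReal_congr (.inter (.inter nonedge₁₂ nonedge₁₃) nonedge₂₃)
    _ = _ := by
        rw [probReal_compl_inter_compl_inter_compl _ measurableSet_edge₁₂ measurableSet_edge₁₃
            measurableSet_edge₂₃, measureReal_edge₁₂, measureReal_edge₁₃, measureReal_edge₂₃,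
          measureReal_edge₁₂_inter_edge₁₃, measureReal_edge₁₂_inter_edge₂₃,
          measureReal_edge₁₃_inter_edge₂₃]
        ring

end InvariantMeasure

section Hexagon

variable {r : ℝ}

theorem integral_abs_neg_self (hr : 0 ≤ r) : ∫ y in (-r)..r, |y| = r ^ 2 := by
  have right_half : ∫ y in (0 : ℝ)..r, |y| = r ^ 2 / 2 := by
    have abs_eq_id : Set.EqOn abs id (Set.uIcc 0 r) := fun y hy ↦
      abs_of_nonneg (Set.uIcc_of_le hr ▸ hy).1
    rw [intervalIntegral.integral_congr abs_eq_id]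
    simp
  have left_half : ∫ y in (-r)..0, |y| = r ^ 2 / 2 := by
    simpa [right_half] using (intervalIntegral.integral_comp_neg (a := 0) (b := r) abs).symm
  rw [← intervalIntegral.integral_add_adjacent_intervals
    (continuous_abs.intervalIntegrable (-r) 0) (continuous_abs.intervalIntegrable 0 r),
    left_half, right_half, add_halves]

theorem min_sub_max_eq_two_mul_sub_abs (r y : ℝ) :
    min r (y + r) - max (-r) (y - r) = 2 * r - |y| := by
  grind

/-- The plane hexagon `|y| < r`, `|z| < r`, `|z - y| < r`: the lift to `ℝ × ℝ` of the event that
three points of a circle of length at least `3 * r` are pairwise joined. -/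
def hexagon (r : ℝ) : Set (ℝ × ℝ) := {p | |p.1| < r ∧ |p.2| < r ∧ |p.2 - p.1| < r}

theorem hexagon_eq_regionBetween (r : ℝ) :
    hexagon r =
      regionBetween (fun y ↦ max (-r) (y - r)) (fun y ↦ min r (y + r)) (Set.Ioo (-r) r) := by
  ext ⟨y, z⟩
  simp only [hexagon, regionBetween, Set.mem_ofPred_eq, Set.mem_Ioo, abs_lt, max_lt_iff,
    lt_min_iff]
  grind

theorem volume_hexagon (hr : 0 ≤ r) : volume (hexagon r) = ENNReal.ofReal (3 * r ^ 2) := by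
  have lower : Continuous fun y : ℝ ↦ max (-r) (y - r) := by fun_prop
  have upper : Continuous fun y : ℝ ↦ min r (y + r) := by fun_prop
  have lower_le_upper : ∀ y ∈ Set.Ioo (-r) r, max (-r) (y - r) ≤ min r (y + r) := by grind
  have area : ∫ y in Set.Ioo (-r) r, (2 * r - |y|) = 3 * r ^ 2 := by
    rw [← integral_Ioc_eq_integral_Ioo, ← intervalIntegral.integral_of_le (by linarith),
      intervalIntegral.integral_sub (by simp) (continuous_abs.intervalIntegrable _ _),
      integral_abs_neg_self hr, intervalIntegral.integral_const, smul_eq_mul]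
    ring
  rw [hexagon_eq_regionBetween, Measure.volume_eq_prod, volume_regionBetween_eq_integral
    (lower.integrableOn_Icc.mono_set Set.Ioo_subset_Icc_self)
    (upper.integrableOn_Icc.mono_set Set.Ioo_subset_Icc_self) measurableSet_Ioo lower_le_upper]
  simp only [Pi.sub_apply, min_sub_max_eq_two_mul_sub_abs, area]

end Hexagon

section AddCircle

variable {T r : ℝ}

theorem norm_coe_lt_iff_abs_lt {x : ℝ} (hx : |x| + r ≤ T) :
    ‖(x : AddCircle T)‖ < r ↔ |x| < r := by
  refine ⟨fun h ↦ ?_, (QuotientAddGroup.norm_mk_le_norm (m := x)).trans_lt⟩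
  rw [AddCircle.norm_eq] at h
  generalize round (T⁻¹ * x) = n at h
  have hT : 0 < T := by linarith [abs_nonneg x, abs_nonneg (x - n * T)]
  have n_eq_zero : n = 0 := by
    by_contra hn
    have one_le_abs : (1 : ℝ) ≤ |(n : ℝ)| := mod_cast Int.one_le_abs hn
    have : T < T := calc
      T ≤ |(n : ℝ)| * T := le_mul_of_one_le_left hT.le one_le_abs
      _ = |n * T| := by rw [abs_mul, abs_of_pos hT]
      _ ≤ |x| + |x - n * T| := by simpa using abs_sub x (x - n * T)
      _ < |x| + r := by gcongr
      _ ≤ T := hx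
    exact this.false
  simpa [n_eq_zero] using h

variable [hT : Fact (0 < T)]

theorem volume_sphere_addCircle (x : AddCircle T) (r : ℝ) : volume (Metric.sphere x r) = 0 := by
  rw [← Metric.closedBall_sdiff_ball]
  exact ae_le_set.1 AddCircle.closedBall_ae_eq_ball.le

theorem volumeReal_ball_addCircle (x : AddCircle T) (hr : 0 ≤ r) (hrT : 2 * r ≤ T) :
    volume.real (Metric.ball x r) = 2 * r := by
  rw [← measureReal_congr AddCircle.closedBall_ae_eq_ball, measureReal_def,
    AddCircle.volume_closedBall, min_eq_right hrT, ENNReal.toReal_ofReal (by positivity)]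

theorem measurePreserving_prodMap_coe_addCircle :
    MeasurePreserving (Prod.map ((↑) : ℝ → AddCircle T) ((↑) : ℝ → AddCircle T))
      (volume.restrict (Set.Ioc (-(T / 2)) (T / 2) ×ˢ Set.Ioc (-(T / 2)) (T / 2))) volume := by
  have coe : MeasurePreserving ((↑) : ℝ → AddCircle T)
      (volume.restrict (Set.Ioc (-(T / 2)) (T / 2))) volume := by
    have := AddCircle.measurePreserving_mk T (-(T / 2))
    rwa [neg_add_eq_sub, sub_half] at this
  rw [Measure.volume_eq_prod ℝ, ← Measure.prod_restrict]
  exact coe.prod coe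

theorem preimage_triangle_inter_eq_hexagon (hrT : 3 * r ≤ T) :
    Prod.map ((↑) : ℝ → AddCircle T) ((↑) : ℝ → AddCircle T) ⁻¹'
        (edge₁₂ r ∩ edge₁₃ r ∩ edge₂₃ r) ∩
        Set.Ioc (-(T / 2)) (T / 2) ×ˢ Set.Ioc (-(T / 2)) (T / 2) =
      hexagon r := by
  have := hT.out
  ext ⟨y, z⟩
  have norm_lt_iff {x : ℝ} (hx : x ∈ Set.Ioc (-(T / 2)) (T / 2)) :
      ‖(x : AddCircle T)‖ < r ↔ |x| < r :=
    norm_coe_lt_iff_abs_lt (by grind)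
  have norm_sub_lt_iff (hy : |y| < r) (hz : |z| < r) :
      ‖(z : AddCircle T) - y‖ < r ↔ |z - y| < r :=
    norm_coe_lt_iff_abs_lt (x := z - y) (by grind)
  have mem_Ioc {x : ℝ} (hx : |x| < r) : x ∈ Set.Ioc (-(T / 2)) (T / 2) := by grind
  simp only [edge₁₂, edge₁₃, edge₂₃, hexagon, Set.mem_inter_iff, Set.mem_preimage,
    Set.mem_ofPred_eq, Prod.map, Set.mem_prod]
  constructor
  · rintro ⟨⟨⟨hy, hz⟩, hyz⟩, hyT, hzT⟩
    rw [norm_lt_iff hyT] at hy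
    rw [norm_lt_iff hzT] at hz
    exact ⟨hy, hz, (norm_sub_lt_iff hy hz).1 hyz⟩
  · rintro ⟨hy, hz, hyz⟩
    exact ⟨⟨⟨(norm_lt_iff (mem_Ioc hy)).2 hy, (norm_lt_iff (mem_Ioc hz)).2 hz⟩,
      (norm_sub_lt_iff hy hz).2 hyz⟩, mem_Ioc hy, mem_Ioc hz⟩

theorem volumeReal_triangle_addCircle (hr : 0 ≤ r) (hrT : 3 * r ≤ T) :
    (volume.prod volume).real
      (edge₁₂ r ∩ edge₁₃ r ∩ edge₂₃ r : Set (AddCircle T × AddCircle T)) = 3 * r ^ 2 := by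
  have measurableSet_triangle :
      MeasurableSet (edge₁₂ r ∩ edge₁₃ r ∩ edge₂₃ r : Set (AddCircle T × AddCircle T)) :=
    (measurableSet_edge₁₂.inter measurableSet_edge₁₃).inter measurableSet_edge₂₃
  rw [← Measure.volume_eq_prod, ← measurePreserving_prodMap_coe_addCircle.measureReal_preimage
      measurableSet_triangle.nullMeasurableSet,
    measureReal_restrict_apply
      (measurePreserving_prodMap_coe_addCircle.measurable measurableSet_triangle),
    preimage_triangle_inter_eq_hexagon hrT, measureReal_def, volume_hexagon hr,
    ENNReal.toReal_ofReal (by positivity)]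

end AddCircle

section UnitCube

theorem norm_coe_unitAddCircle_eq_min {x : ℝ} (hx : |x| ≤ 1) :
    ‖(x : UnitAddCircle)‖ = min |x| (1 - |x|) := by
  have norm_coe_abs : ‖((|x| : ℝ) : UnitAddCircle)‖ = ‖(x : UnitAddCircle)‖ := by
    rcases abs_choice x with h | h <;> simp [h]
  rw [← norm_coe_abs, UnitAddCircle.norm_eq, abs_sub_round_eq_min]
  rcases hx.eq_or_lt with h | h
  · simp [h]
  · rw [Int.fract_eq_self.2 ⟨abs_nonneg x, h⟩]

theorem rhoT_eq_norm_coe_sub {x y : ℝ} (hx : x ∈ Set.Icc (0 : ℝ) 1) (hy : y ∈ Set.Icc (0 : ℝ) 1) :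
    rhoT x y = ‖(y : UnitAddCircle) - x‖ := by
  rw [← AddCircle.coe_sub, norm_coe_unitAddCircle_eq_min (by grind), rhoT, abs_sub_comm]

instance isProbabilityMeasure_unitAddCircle :
    IsProbabilityMeasure (volume : Measure UnitAddCircle) :=
  ⟨UnitAddCircle.measure_univ⟩

theorem measurePreserving_coe_sub_fst_unitCube3 :
    MeasurePreserving
      (fun p : ℝ × ℝ × ℝ ↦ ((p.2.1 - p.1, p.2.2 - p.1) : UnitAddCircle × UnitAddCircle))
      (volume.restrict unitCube3) volume := by
  have coe : MeasurePreserving ((↑) : ℝ → UnitAddCircle)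
      (volume.restrict (Set.Icc 0 1)) volume := by
    simpa [restrict_Ioc_eq_restrict_Icc] using UnitAddCircle.measurePreserving_mk 0
  have coe_prod := coe.prod (coe.prod coe)
  rw [Measure.prod_restrict, Measure.prod_restrict] at coe_prod
  exact (measurePreserving_sub_fst_sub_fst volume).comp coe_prod

theorem volume_unitCube3_rhoT_mem {I J K : Set ℝ} (hI : MeasurableSet I) (hJ : MeasurableSet J)
    (hK : MeasurableSet K) :
    volume {p : ℝ × ℝ × ℝ | p ∈ unitCube3 ∧
        rhoT p.1 p.2.1 ∈ I ∧ rhoT p.1 p.2.2 ∈ J ∧ rhoT p.2.1 p.2.2 ∈ K} =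
      ENNReal.ofReal ((volume.prod volume).real
        {q : UnitAddCircle × UnitAddCircle | ‖q.1‖ ∈ I ∧ ‖q.2‖ ∈ J ∧ ‖q.2 - q.1‖ ∈ K}) := by
  have measurableSet_norms : MeasurableSet
      {q : UnitAddCircle × UnitAddCircle | ‖q.1‖ ∈ I ∧ ‖q.2‖ ∈ J ∧ ‖q.2 - q.1‖ ∈ K} :=
    (measurable_fst.norm hI).inter
      ((measurable_snd.norm hJ).inter ((measurable_snd.sub measurable_fst).norm hK))
  rw [ofReal_measureReal, ← Measure.volume_eq_prod,
    ← measurePreserving_coe_sub_fst_unitCube3.measure_preimage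
      measurableSet_norms.nullMeasurableSet,
    Measure.restrict_apply
      (measurePreserving_coe_sub_fst_unitCube3.measurable measurableSet_norms)]
  congr 1
  ext p
  rw [Set.inter_comm]
  refine and_congr_right fun ⟨h₁, h₂, h₃⟩ ↦ ?_
  simp [rhoT_eq_norm_coe_sub h₁ h₂, rhoT_eq_norm_coe_sub h₁ h₃, rhoT_eq_norm_coe_sub h₂ h₃]

end UnitCube

theorem stmt_0 (r₀ : ℝ) (h0 : 0 < r₀) (h13 : r₀ < 1/3) :
    (volume {p : ℝ × ℝ × ℝ | p ∈ unitCube3 ∧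
        rhoT p.1 p.2.1 < r₀ ∧ rhoT p.1 p.2.2 < r₀ ∧ rhoT p.2.1 p.2.2 < r₀}
      = ENNReal.ofReal (3 * r₀ ^ 2)) ∧
    (volume {p : ℝ × ℝ × ℝ | p ∈ unitCube3 ∧
        rhoT p.1 p.2.1 < r₀ ∧ rhoT p.1 p.2.2 < r₀ ∧ rhoT p.2.1 p.2.2 > r₀}
      = ENNReal.ofReal (r₀ ^ 2)) ∧
    (volume {p : ℝ × ℝ × ℝ | p ∈ unitCube3 ∧
        rhoT p.1 p.2.1 < r₀ ∧ rhoT p.1 p.2.2 > r₀ ∧ rhoT p.2.1 p.2.2 > r₀}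
      = ENNReal.ofReal (2 * r₀ - 5 * r₀ ^ 2)) ∧
    (volume {p : ℝ × ℝ × ℝ | p ∈ unitCube3 ∧
        rhoT p.1 p.2.1 > r₀ ∧ rhoT p.1 p.2.2 > r₀ ∧ rhoT p.2.1 p.2.2 > r₀}
      = ENNReal.ofReal ((1 - 3 * r₀) ^ 2)) := by
  have joined : MeasurableSet (Set.Iio r₀) := measurableSet_Iio
  have apart : MeasurableSet (Set.Ioi r₀) := measurableSet_Ioi
  have sphere_null := volume_sphere_addCircle (0 : UnitAddCircle) r₀
  have edge_prob := volumeReal_ball_addCircle (0 : UnitAddCircle) h0.le (by linarith)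
  have triangle_prob := volumeReal_triangle_addCircle (T := 1) h0.le (by linarith)
  refine ⟨(volume_unitCube3_rhoT_mem joined joined joined).trans (congrArg _ ?_),
    (volume_unitCube3_rhoT_mem joined joined apart).trans (congrArg _ ?_),
    (volume_unitCube3_rhoT_mem joined apart apart).trans (congrArg _ ?_),
    (volume_unitCube3_rhoT_mem apart apart apart).trans (congrArg _ ?_)⟩
  · rw [← triangle_prob]
    congr 1
    ext q
    simp [edge₁₂, edge₁₃, edge₂₃, and_assoc]
  · refine (measureReal_two_edges volume sphere_null).trans ?_
    rw [edge_prob, triangle_prob]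
    ring
  · refine (measureReal_one_edge volume sphere_null).trans ?_
    rw [edge_prob, triangle_prob]
    ring
  · refine (measureReal_no_edge volume sphere_null).trans ?_
    rw [edge_prob, triangle_prob]
    ring
end

section
/- Let X₁, X₂, X₃ be independent uniformly distributed random points on [0,1] with the Euclidean distance |x−y|. Fix 1/2 < r₀ < 1. Then: (i) the probability that all three pairwise distances are less than r₀ equals 3r₀² − 2r₀³; (ii) the probability that |X₁−X₂| < r₀ and |X₁−X₃| < r₀ but |X₂−X₃| > r₀ equals (4/3)r₀³ − (1/3)(3r₀−1)²; (iii) the probability that |X₁−X₂| < r₀ but |X₁−X₃| > r₀ and |X₂−X₃| > r₀ equals (2/3)(1−r₀)³; (iv) the probability that all three pairwise distances exceed r₀ equals 0. -/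
open MeasureTheory

/-!
Call two points far if they are at distance more than `r₀`, and let `d x` be the probability that a
uniform point of `[0,1]` is far from `x`. Conditioning on the common point, one pair is far with
probability `∫ d`, and two given pairs are both far with probability `∫ d²`. Three pairs cannot be
far at once, since `2 r₀ > 1`. Inclusion-exclusion therefore gives all four probabilities in terms
of these two integrals: they are `1 - 3 ∫ d + 3 ∫ d²`, `∫ d - 2 ∫ d²`, `∫ d²` and `0`.
On `[0,1]` we have `d x = (x - r₀)⁺ + (1 - r₀ - x)⁺`, where at most one summand is nonzero, so
`∫ dᵏ = 2 (1 - r₀)ᵏ⁺¹ / (k + 1)`. Distances equal to `r₀` have probability zero.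
-/

section MeasureReal

variable {α β : Type*} [MeasurableSpace α] [MeasurableSpace β]

lemma measureReal_prod_apply (μ : Measure α) (ν : Measure β) [IsFiniteMeasure ν]
    {s : Set (α × β)} (hs : MeasurableSet s) :
    (μ.prod ν).real s = ∫ x, ν.real (Prod.mk x ⁻¹' s) ∂μ := by
  simp only [Measure.real]
  rw [Measure.prod_apply hs, integral_toReal (measurable_measure_prodMk_left hs).aemeasurable
    (.of_forall fun x => measure_lt_top ν _)]

lemma measureReal_compl_inter (μ : Measure α) [IsFiniteMeasure μ] {s : Set α}
    (hs : MeasurableSet s) (t : Set α) : μ.real (sᶜ ∩ t) = μ.real t - μ.real (s ∩ t) := by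
  rw [eq_sub_iff_add_eq', Set.inter_comm s, Set.inter_comm sᶜ, ← Set.sdiff_eq,
    measureReal_inter_add_sdiff hs]

end MeasureReal

section IidTriple

variable {α : Type*} [MeasurableSpace α]

/-- The law of three independent points with common law `ν`. -/
noncomputable abbrev iidTriple (ν : Measure α) : Measure (α × α × α) := ν.prod (ν.prod ν)

/-- The normalised degree of `x` in the graph of the relation `R`: the `ν`-probability that a random
point is related to `x`. -/
noncomputable def relDegree (ν : Measure α) (R : α → α → Prop) (x : α) : ℝ := ν.real {y | R x y}

/-- The event that the first and second of three points are related by `R`. -/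
def rel₁₂ (R : α → α → Prop) : Set (α × α × α) := {p | R p.1 p.2.1}

/-- The event that the first and third of three points are related by `R`. -/
def rel₁₃ (R : α → α → Prop) : Set (α × α × α) := {p | R p.1 p.2.2}

/-- The event that the second and third of three points are related by `R`. -/
def rel₂₃ (R : α → α → Prop) : Set (α × α × α) := {p | R p.2.1 p.2.2}

section Measurability

variable {R : α → α → Prop}

lemma measurableSet_rel₁₂ (hR : MeasurableSet {p : α × α | R p.1 p.2}) :
    MeasurableSet (rel₁₂ R) :=
  hR.preimage (f := fun p : α × α × α => (p.1, p.2.1)) (by fun_prop)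

lemma measurableSet_rel₁₃ (hR : MeasurableSet {p : α × α | R p.1 p.2}) :
    MeasurableSet (rel₁₃ R) :=
  hR.preimage (f := fun p : α × α × α => (p.1, p.2.2)) (by fun_prop)

lemma measurableSet_rel₂₃ (hR : MeasurableSet {p : α × α | R p.1 p.2}) :
    MeasurableSet (rel₂₃ R) :=
  hR.preimage (f := fun p : α × α × α => (p.2.1, p.2.2)) (by fun_prop)

end Measurability

lemma measurePreserving_rotate (ν : Measure α) [SFinite ν] :
    MeasurePreserving (fun p : α × α × α => (p.2.1, p.2.2, p.1)) (iidTriple ν) (iidTriple ν) :=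
  (measurePreserving_prodAssoc ν ν ν).comp Measure.measurePreserving_swap

lemma measureReal_preimage_rotate (ν : Measure α) [SFinite ν] {s : Set (α × α × α)}
    (hs : MeasurableSet s) :
    (iidTriple ν).real ((fun p => (p.2.1, p.2.2, p.1)) ⁻¹' s) = (iidTriple ν).real s :=
  (measurePreserving_rotate ν).measureReal_preimage hs.nullMeasurableSet

section PairProbabilities

variable (ν : Measure α) [IsProbabilityMeasure ν] {R : α → α → Prop}

lemma measureReal_rel₁₂ (hR : MeasurableSet {p : α × α | R p.1 p.2}) :
    (iidTriple ν).real (rel₁₂ R) = ∫ x, relDegree ν R x ∂ν := by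
  have slice (x : α) : Prod.mk x ⁻¹' rel₁₂ R = {y | R x y} ×ˢ Set.univ := by
    ext; simp [rel₁₂]
  simp_rw [iidTriple, measureReal_prod_apply _ _ (measurableSet_rel₁₂ hR), slice,
    measureReal_prod_prod, probReal_univ, mul_one, relDegree]

lemma measureReal_rel₂₃ (hR : MeasurableSet {p : α × α | R p.1 p.2}) :
    (iidTriple ν).real (rel₂₃ R) = ∫ x, relDegree ν R x ∂ν :=
  (measureReal_preimage_rotate ν (measurableSet_rel₁₂ hR)).trans (measureReal_rel₁₂ ν hR)

lemma measureReal_rel₁₃ [Std.Symm R] (hR : MeasurableSet {p : α × α | R p.1 p.2}) :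
    (iidTriple ν).real (rel₁₃ R) = ∫ x, relDegree ν R x ∂ν := by
  have rotate : rel₁₃ R = (fun p : α × α × α => (p.2.1, p.2.2, p.1)) ⁻¹' rel₂₃ R :=
    Set.ext fun _ => comm_of R
  rw [rotate, measureReal_preimage_rotate ν (measurableSet_rel₂₃ hR), measureReal_rel₂₃ ν hR]

end PairProbabilities

section StarProbabilities

variable (ν : Measure α) [IsFiniteMeasure ν] {R : α → α → Prop}

lemma measureReal_rel₁₂_inter_rel₁₃ (hR : MeasurableSet {p : α × α | R p.1 p.2}) :
    (iidTriple ν).real (rel₁₂ R ∩ rel₁₃ R) = ∫ x, relDegree ν R x ^ 2 ∂ν := by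
  have slice (x : α) : Prod.mk x ⁻¹' (rel₁₂ R ∩ rel₁₃ R) = {y | R x y} ×ˢ {y | R x y} := rfl
  simp_rw [iidTriple, measureReal_prod_apply _ _ ((measurableSet_rel₁₂ hR).inter
    (measurableSet_rel₁₃ hR)), slice, measureReal_prod_prod, relDegree, sq]

lemma measureReal_rel₁₂_inter_rel₂₃ [Std.Symm R]
    (hR : MeasurableSet {p : α × α | R p.1 p.2}) :
    (iidTriple ν).real (rel₁₂ R ∩ rel₂₃ R) = ∫ x, relDegree ν R x ^ 2 ∂ν := by
  have rotate : rel₁₂ R ∩ rel₂₃ R =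
      (fun p : α × α × α => (p.2.1, p.2.2, p.1)) ⁻¹' (rel₁₂ R ∩ rel₁₃ R) :=
    Set.ext fun _ => and_comm.trans (and_congr_right' (comm_of R))
  rw [rotate, measureReal_preimage_rotate ν
    ((measurableSet_rel₁₂ hR).inter (measurableSet_rel₁₃ hR)), measureReal_rel₁₂_inter_rel₁₃ ν hR]

lemma measureReal_rel₁₃_inter_rel₂₃ [Std.Symm R]
    (hR : MeasurableSet {p : α × α | R p.1 p.2}) :
    (iidTriple ν).real (rel₁₃ R ∩ rel₂₃ R) = ∫ x, relDegree ν R x ^ 2 ∂ν := by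
  have rotate : rel₁₃ R ∩ rel₂₃ R =
      (fun p : α × α × α => (p.2.1, p.2.2, p.1)) ⁻¹' (rel₁₂ R ∩ rel₂₃ R) :=
    Set.ext fun _ => and_comm.trans (and_congr_right' (comm_of R))
  rw [rotate, measureReal_preimage_rotate ν
    ((measurableSet_rel₁₂ hR).inter (measurableSet_rel₂₃ hR)),
    measureReal_rel₁₂_inter_rel₂₃ ν hR]

lemma measureReal_compl_rel₁₂_inter_rel₁₃_inter_rel₂₃
    [Std.Symm R] (hR : MeasurableSet {p : α × α | R p.1 p.2}) :
    (iidTriple ν).real ((rel₁₂ R)ᶜ ∩ (rel₁₃ R ∩ rel₂₃ R)) =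
      ∫ x, relDegree ν R x ^ 2 ∂ν - (iidTriple ν).real (rel₁₂ R ∩ (rel₁₃ R ∩ rel₂₃ R)) := by
  rw [measureReal_compl_inter _ (measurableSet_rel₁₂ hR),
    measureReal_rel₁₃_inter_rel₂₃ ν hR]

end StarProbabilities

section InducedGraphProbabilities

variable (ν : Measure α) [IsProbabilityMeasure ν] {R : α → α → Prop}

lemma measureReal_compl_rel₁₂_inter_compl_rel₁₃_inter_rel₂₃
    [Std.Symm R] (hR : MeasurableSet {p : α × α | R p.1 p.2}) :
    (iidTriple ν).real ((rel₁₂ R)ᶜ ∩ ((rel₁₃ R)ᶜ ∩ rel₂₃ R)) =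
      ∫ x, relDegree ν R x ∂ν - 2 * ∫ x, relDegree ν R x ^ 2 ∂ν +
        (iidTriple ν).real (rel₁₂ R ∩ (rel₁₃ R ∩ rel₂₃ R)) := by
  rw [Set.inter_left_comm, measureReal_compl_inter _ (measurableSet_rel₁₃ hR),
    Set.inter_left_comm, measureReal_compl_inter _ (measurableSet_rel₁₂ hR),
    measureReal_compl_rel₁₂_inter_rel₁₃_inter_rel₂₃ ν hR,
    measureReal_rel₂₃ ν hR, measureReal_rel₁₂_inter_rel₂₃ ν hR]
  ring

lemma measureReal_compl_rel₁₂_inter_compl_rel₁₃_inter_compl_rel₂₃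
    [Std.Symm R] (hR : MeasurableSet {p : α × α | R p.1 p.2}) :
    (iidTriple ν).real ((rel₁₂ R)ᶜ ∩ ((rel₁₃ R)ᶜ ∩ (rel₂₃ R)ᶜ)) =
      1 - 3 * ∫ x, relDegree ν R x ∂ν + 3 * ∫ x, relDegree ν R x ^ 2 ∂ν -
        (iidTriple ν).real (rel₁₂ R ∩ (rel₁₃ R ∩ rel₂₃ R)) := by
  have h₁₂ := measurableSet_rel₁₂ hR
  have h₁₃ := measurableSet_rel₁₃ hR
  have no_rel₁₂_rel₁₃ : (iidTriple ν).real ((rel₁₂ R)ᶜ ∩ (rel₁₃ R)ᶜ) =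
      1 - 2 * ∫ x, relDegree ν R x ∂ν + ∫ x, relDegree ν R x ^ 2 ∂ν := by
    rw [measureReal_compl_inter _ h₁₂, probReal_compl_eq_one_sub h₁₃, Set.inter_comm,
      measureReal_compl_inter _ h₁₃, Set.inter_comm, measureReal_rel₁₂_inter_rel₁₃ ν hR,
      measureReal_rel₁₂ ν hR, measureReal_rel₁₃ ν hR]
    ring
  rw [← Set.inter_assoc, Set.inter_comm,
    measureReal_compl_inter _ (measurableSet_rel₂₃ hR), no_rel₁₂_rel₁₃, Set.inter_comm,
    Set.inter_assoc, measureReal_compl_rel₁₂_inter_compl_rel₁₃_inter_rel₂₃ ν hR]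
  ring

lemma ae_notMem_rel₁₂_rel₁₃_rel₂₃ [Std.Symm R]
    (hR : MeasurableSet {p : α × α | R p.1 p.2}) (hdeg : relDegree ν R = 0) :
    ∀ᵐ p ∂iidTriple ν, p ∉ rel₁₂ R ∧ p ∉ rel₁₃ R ∧ p ∉ rel₂₃ R := by
  have integral_eq_zero : ∫ x, relDegree ν R x ∂ν = 0 := by simp [hdeg]
  have ae_notMem {s : Set (α × α × α)} (hs : (iidTriple ν).real s = ∫ x, relDegree ν R x ∂ν) :
      ∀ᵐ p ∂iidTriple ν, p ∉ s := by
    rw [← measure_eq_zero_iff_ae_notMem, ← measureReal_eq_zero_iff, hs, integral_eq_zero]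
  filter_upwards [ae_notMem (measureReal_rel₁₂ ν hR), ae_notMem (measureReal_rel₁₃ ν hR),
    ae_notMem (measureReal_rel₂₃ ν hR)] with p h₁₂ h₁₃ h₂₃
  exact ⟨h₁₂, h₁₃, h₂₃⟩

end InducedGraphProbabilities

end IidTriple

section PositivePartIntegrals

lemma integral_max_sub_zero_pow {a b c : ℝ} (hac : a ≤ c) (hcb : c ≤ b) {k : ℕ} (hk : k ≠ 0) :
    ∫ x in a..b, max (x - c) 0 ^ k = (b - c) ^ (k + 1) / (k + 1) := by
  have hcont : Continuous fun x : ℝ => max (x - c) 0 ^ k := by fun_prop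
  have left : ∫ x in a..c, max (x - c) 0 ^ k = 0 := by
    refine (intervalIntegral.integral_congr fun x hx => ?_).trans intervalIntegral.integral_zero
    rw [Set.uIcc_of_le hac] at hx
    simp [max_eq_right (sub_nonpos.2 hx.2), hk]
  have right : ∫ x in c..b, max (x - c) 0 ^ k = ∫ x in c..b, (x - c) ^ k := by
    refine intervalIntegral.integral_congr fun x hx => ?_
    rw [Set.uIcc_of_le hcb] at hx
    simp only [max_eq_left (sub_nonneg.2 hx.1)]
  rw [← intervalIntegral.integral_add_adjacent_intervals (hcont.intervalIntegrable a c)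
    (hcont.intervalIntegrable c b), left, right,
    intervalIntegral.integral_comp_sub_right fun x => x ^ k]
  simp

lemma add_pow_of_mul_eq_zero {M : Type*} [CommSemiring M] {a b : M} (hab : a * b = 0) {k : ℕ}
    (hk : k ≠ 0) : (a + b) ^ k = a ^ k + b ^ k := by
  obtain ⟨k, rfl⟩ := Nat.exists_eq_succ_of_ne_zero hk
  induction k with
  | zero => simp
  | succ k ih =>
    calc (a + b) ^ (k + 2) = (a ^ (k + 1) + b ^ (k + 1)) * (a + b) := by
          rw [pow_succ, ih k.succ_ne_zero]
      _ = a ^ (k + 2) + b ^ (k + 2) + (a ^ k + b ^ k) * (a * b) := by ring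
      _ = a ^ (k + 2) + b ^ (k + 2) := by rw [hab, mul_zero, add_zero]

lemma integral_max_add_max_pow {r : ℝ} (hr : 1 / 2 ≤ r) (hr1 : r ≤ 1) {k : ℕ} (hk : k ≠ 0) :
    ∫ x in (0 : ℝ)..1, (max (x - r) 0 + max (1 - r - x) 0) ^ k =
      2 * (1 - r) ^ (k + 1) / (k + 1) := by
  have disjoint (x : ℝ) : max (x - r) 0 * max (1 - r - x) 0 = 0 := by
    rcases le_total x r with h | h
    · rw [max_eq_right (by linarith), zero_mul]
    · rw [max_eq_right (a := 1 - r - x) (by linarith), mul_zero]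
  have reflect : ∫ x in (0 : ℝ)..1, max (1 - r - x) 0 ^ k =
      ∫ x in (0 : ℝ)..1, max (x - r) 0 ^ k := by
    simpa [sub_right_comm] using
      intervalIntegral.integral_comp_sub_left (a := 0) (b := 1) (fun x => max (x - r) 0 ^ k) 1
  simp_rw [fun x => add_pow_of_mul_eq_zero (disjoint x) hk]
  rw [intervalIntegral.integral_add (Continuous.intervalIntegrable (by fun_prop) _ _)
    (Continuous.intervalIntegrable (by fun_prop) _ _), reflect,
    integral_max_sub_zero_pow (by linarith) hr1 hk]
  ring

end PositivePartIntegrals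

section UnitInterval

/-- The uniform distribution on `[0,1]`. -/
noncomputable abbrev uniformUnit : Measure ℝ := volume.restrict (Set.Icc 0 1)

instance isProbabilityMeasure_uniformUnit : IsProbabilityMeasure uniformUnit :=
  ⟨by simp⟩

lemma measurableSet_unitCube3 : MeasurableSet unitCube3 :=
  measurableSet_Icc.prod (measurableSet_Icc.prod measurableSet_Icc)

lemma volume_restrict_unitCube3 : volume.restrict unitCube3 = iidTriple uniformUnit := by
  simp only [iidTriple, uniformUnit, unitCube3, Measure.prod_restrict, Measure.volume_eq_prod]

lemma volume_mem_unitCube3_and (P : ℝ × ℝ × ℝ → Prop) :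
    volume {p | p ∈ unitCube3 ∧ P p} =
      ENNReal.ofReal ((iidTriple uniformUnit).real {p | P p}) := by
  rw [ofReal_measureReal, ← volume_restrict_unitCube3, Measure.restrict_apply'
    measurableSet_unitCube3, Set.inter_comm]
  rfl

/-- The points `x` and `y` are at distance more than `r`, i.e. not adjacent in the random
geometric graph of connection radius `r`. -/
def Far (r x y : ℝ) : Prop := r < |x - y|

instance Far.symm (r : ℝ) : Std.Symm (Far r) := ⟨fun _ _ h => by rwa [Far, abs_sub_comm]⟩

lemma measurableSet_far (r : ℝ) : MeasurableSet {p : ℝ × ℝ | Far r p.1 p.2} :=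
  measurableSet_lt measurable_const (by fun_prop)

lemma relDegree_far {r x : ℝ} (hr : 0 ≤ r) (hx : x ∈ Set.Icc (0 : ℝ) 1) :
    relDegree uniformUnit (Far r) x = max (x - r) 0 + max (1 - r - x) 0 := by
  have far_eq : {y | Far r x y} ∩ Set.Icc 0 1 = Set.Ico 0 (x - r) ∪ Set.Ioc (x + r) 1 := by
    ext y
    simp only [Far, lt_abs, Set.mem_inter_iff, Set.mem_ofPred_eq, Set.mem_Icc, Set.mem_union,
      Set.mem_Ico, Set.mem_Ioc] at hx ⊢
    grind
  have disjoint : Disjoint (Set.Ico 0 (x - r)) (Set.Ioc (x + r) 1) :=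
    Set.disjoint_left.2 fun y hy hy' => by linarith [hy.2, hy'.1]
  rw [relDegree, measureReal_restrict_apply' measurableSet_Icc, far_eq,
    measureReal_union disjoint measurableSet_Ioc measure_Ico_lt_top.ne measure_Ioc_lt_top.ne,
    Real.volume_real_Ico, Real.volume_real_Ioc, sub_zero, sub_add_eq_sub_sub_swap]

lemma integral_relDegree_far_pow {r : ℝ} (hr : 1 / 2 ≤ r) (hr1 : r ≤ 1) {k : ℕ} (hk : k ≠ 0) :
    ∫ x, relDegree uniformUnit (Far r) x ^ k ∂uniformUnit = 2 * (1 - r) ^ (k + 1) / (k + 1) := by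
  have on_Icc : ∀ x ∈ Set.Icc (0 : ℝ) 1, relDegree uniformUnit (Far r) x ^ k =
      (max (x - r) 0 + max (1 - r - x) 0) ^ k := fun x hx => by
    rw [relDegree_far (by linarith) hx]
  rw [setIntegral_congr_fun measurableSet_Icc on_Icc, integral_Icc_eq_integral_Ioc,
    ← intervalIntegral.integral_of_le zero_le_one, integral_max_add_max_pow hr hr1 hk]

lemma integral_relDegree_far {r : ℝ} (hr : 1 / 2 ≤ r) (hr1 : r ≤ 1) :
    ∫ x, relDegree uniformUnit (Far r) x ∂uniformUnit = (1 - r) ^ 2 := by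
  simpa [one_add_one_eq_two] using integral_relDegree_far_pow hr hr1 one_ne_zero

lemma integral_relDegree_far_sq {r : ℝ} (hr : 1 / 2 ≤ r) (hr1 : r ≤ 1) :
    ∫ x, relDegree uniformUnit (Far r) x ^ 2 ∂uniformUnit = 2 / 3 * (1 - r) ^ 3 := by
  rw [integral_relDegree_far_pow hr hr1 two_ne_zero]
  push_cast
  ring

lemma not_far_and_far_and_far {r x y z : ℝ} (hr : 1 / 2 ≤ r) (hx : x ∈ Set.Icc (0 : ℝ) 1)
    (hy : y ∈ Set.Icc (0 : ℝ) 1) (hz : z ∈ Set.Icc (0 : ℝ) 1) :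
    ¬(Far r x y ∧ Far r x z ∧ Far r y z) := by
  simp only [Far, lt_abs, Set.mem_Icc] at *
  grind

lemma measureReal_rel₁₂_inter_rel₁₃_inter_rel₂₃_far {r : ℝ} (hr : 1 / 2 ≤ r) :
    (iidTriple uniformUnit).real (rel₁₂ (Far r) ∩ (rel₁₃ (Far r) ∩ rel₂₃ (Far r))) = 0 := by
  have mem_cube : ∀ᵐ p ∂iidTriple uniformUnit, p ∈ unitCube3 := by
    rw [← volume_restrict_unitCube3]
    exact ae_restrict_mem measurableSet_unitCube3
  rw [measureReal_eq_zero_iff, measure_eq_zero_iff_ae_notMem]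
  filter_upwards [mem_cube] with p ⟨hx, hy, hz⟩
  exact not_far_and_far_and_far hr hx hy hz

lemma relDegree_abs_sub_eq (ν : Measure ℝ) [NullSingletonClass ν] (r : ℝ) :
    relDegree ν (fun x y => |x - y| = r) = 0 := by
  funext x
  have subset : {y | |x - y| = r} ⊆ {x - r, x + r} := fun y hy => by
    rcases eq_or_eq_neg_of_abs_eq hy with h | h
    · left; linarith
    · right; simp only [Set.mem_singleton_iff]; linarith
  have null : ν {y | |x - y| = r} = 0 := measure_mono_null subset ((Set.toFinite _).measure_zero ν)
  simp [relDegree, Measure.real, null]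

lemma ae_abs_sub_ne (ν : Measure ℝ) [IsProbabilityMeasure ν] [NullSingletonClass ν] (r : ℝ) :
    ∀ᵐ p ∂iidTriple ν, |p.1 - p.2.1| ≠ r ∧ |p.1 - p.2.2| ≠ r ∧ |p.2.1 - p.2.2| ≠ r :=
  have : Std.Symm fun x y : ℝ => |x - y| = r := ⟨fun _ _ h => by rwa [abs_sub_comm]⟩
  ae_notMem_rel₁₂_rel₁₃_rel₂₃ ν (R := fun x y => |x - y| = r)
    (measurableSet_eq_fun (by fun_prop) measurable_const) (relDegree_abs_sub_eq ν r)

lemma ae_abs_sub_lt_iff_notMem_far (ν : Measure ℝ) [IsProbabilityMeasure ν]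
    [NullSingletonClass ν] (r : ℝ) : ∀ᵐ p ∂iidTriple ν,
      (|p.1 - p.2.1| < r ↔ p ∉ rel₁₂ (Far r)) ∧ (|p.1 - p.2.2| < r ↔ p ∉ rel₁₃ (Far r)) ∧
        (|p.2.1 - p.2.2| < r ↔ p ∉ rel₂₃ (Far r)) := by
  have lt_iff_not_far {x y : ℝ} (hne : |x - y| ≠ r) : |x - y| < r ↔ ¬Far r x y :=
    hne.le_iff_lt.symm.trans not_lt.symm
  filter_upwards [ae_abs_sub_ne ν r] with p ⟨h₁₂, h₁₃, h₂₃⟩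
  exact ⟨lt_iff_not_far h₁₂, lt_iff_not_far h₁₃, lt_iff_not_far h₂₃⟩

lemma measureReal_uniformUnit_three_edges {r : ℝ} (hr : 1 / 2 ≤ r) (hr1 : r ≤ 1) :
    (iidTriple uniformUnit).real
        {p | |p.1 - p.2.1| < r ∧ |p.1 - p.2.2| < r ∧ |p.2.1 - p.2.2| < r} =
      3 * r ^ 2 - 2 * r ^ 3 :=
  calc
    _ = (iidTriple uniformUnit).real ((rel₁₂ (Far r))ᶜ ∩ ((rel₁₃ (Far r))ᶜ ∩ (rel₂₃ (Far r))ᶜ)) :=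
      measureReal_congr <| (ae_abs_sub_lt_iff_notMem_far _ r).mono fun p ⟨h₁₂, h₁₃, h₂₃⟩ =>
        propext (and_congr h₁₂ (and_congr h₁₃ h₂₃))
    _ = _ := by
      rw [measureReal_compl_rel₁₂_inter_compl_rel₁₃_inter_compl_rel₂₃ _ (measurableSet_far r),
        integral_relDegree_far hr hr1, integral_relDegree_far_sq hr hr1,
        measureReal_rel₁₂_inter_rel₁₃_inter_rel₂₃_far hr]
      ring

lemma measureReal_uniformUnit_two_edges {r : ℝ} (hr : 1 / 2 ≤ r) (hr1 : r ≤ 1) :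
    (iidTriple uniformUnit).real
        {p | |p.1 - p.2.1| < r ∧ |p.1 - p.2.2| < r ∧ |p.2.1 - p.2.2| > r} =
      4 / 3 * r ^ 3 - 1 / 3 * (3 * r - 1) ^ 2 :=
  calc
    _ = (iidTriple uniformUnit).real ((rel₁₂ (Far r))ᶜ ∩ ((rel₁₃ (Far r))ᶜ ∩ rel₂₃ (Far r))) :=
      measureReal_congr <| (ae_abs_sub_lt_iff_notMem_far _ r).mono fun p ⟨h₁₂, h₁₃, _⟩ =>
        propext (and_congr h₁₂ (and_congr_left' h₁₃))
    _ = _ := by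
      rw [measureReal_compl_rel₁₂_inter_compl_rel₁₃_inter_rel₂₃ _ (measurableSet_far r),
        integral_relDegree_far hr hr1, integral_relDegree_far_sq hr hr1,
        measureReal_rel₁₂_inter_rel₁₃_inter_rel₂₃_far hr]
      ring

lemma measureReal_uniformUnit_one_edge {r : ℝ} (hr : 1 / 2 ≤ r) (hr1 : r ≤ 1) :
    (iidTriple uniformUnit).real
        {p | |p.1 - p.2.1| < r ∧ |p.1 - p.2.2| > r ∧ |p.2.1 - p.2.2| > r} =
      2 / 3 * (1 - r) ^ 3 :=
  calc
    _ = (iidTriple uniformUnit).real ((rel₁₂ (Far r))ᶜ ∩ (rel₁₃ (Far r) ∩ rel₂₃ (Far r))) :=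
      measureReal_congr <| (ae_abs_sub_lt_iff_notMem_far _ r).mono fun p ⟨h₁₂, _⟩ =>
        propext (and_congr_left' h₁₂)
    _ = _ := by
      rw [measureReal_compl_rel₁₂_inter_rel₁₃_inter_rel₂₃ _ (measurableSet_far r),
        integral_relDegree_far_sq hr hr1, measureReal_rel₁₂_inter_rel₁₃_inter_rel₂₃_far hr,
        sub_zero]

lemma measureReal_uniformUnit_no_edges {r : ℝ} (hr : 1 / 2 ≤ r) :
    (iidTriple uniformUnit).real
        {p | |p.1 - p.2.1| > r ∧ |p.1 - p.2.2| > r ∧ |p.2.1 - p.2.2| > r} = 0 :=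
  measureReal_rel₁₂_inter_rel₁₃_inter_rel₂₃_far hr

end UnitInterval

theorem stmt_3 (r₀ : ℝ) (h12 : 1/2 < r₀) (h1 : r₀ < 1) :
    (volume {p : ℝ × ℝ × ℝ | p ∈ unitCube3 ∧
        |p.1 - p.2.1| < r₀ ∧ |p.1 - p.2.2| < r₀ ∧ |p.2.1 - p.2.2| < r₀}
      = ENNReal.ofReal (3 * r₀ ^ 2 - 2 * r₀ ^ 3)) ∧
    (volume {p : ℝ × ℝ × ℝ | p ∈ unitCube3 ∧
        |p.1 - p.2.1| < r₀ ∧ |p.1 - p.2.2| < r₀ ∧ |p.2.1 - p.2.2| > r₀}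
      = ENNReal.ofReal ((4/3) * r₀ ^ 3 - (1/3) * (3 * r₀ - 1) ^ 2)) ∧
    (volume {p : ℝ × ℝ × ℝ | p ∈ unitCube3 ∧
        |p.1 - p.2.1| < r₀ ∧ |p.1 - p.2.2| > r₀ ∧ |p.2.1 - p.2.2| > r₀}
      = ENNReal.ofReal ((2/3) * (1 - r₀) ^ 3)) ∧
    (volume {p : ℝ × ℝ × ℝ | p ∈ unitCube3 ∧
        |p.1 - p.2.1| > r₀ ∧ |p.1 - p.2.2| > r₀ ∧ |p.2.1 - p.2.2| > r₀}
      = 0) := by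
  simp only [volume_mem_unitCube3_and, measureReal_uniformUnit_three_edges h12.le h1.le,
    measureReal_uniformUnit_two_edges h12.le h1.le, measureReal_uniformUnit_one_edge h12.le h1.le,
    measureReal_uniformUnit_no_edges h12.le, ENNReal.ofReal_zero, and_self]
end

section
/- Define H : (0, 1/2) → ℝ by H(r₀) = −(1−3r₀)² log₂((1−3r₀)²) − 3(2r₀−5r₀²) log₂(2r₀−5r₀²) − 3r₀² log₂(r₀²) − 3r₀² log₂(3r₀²) for 0 < r₀ < 1/3, and H(r₀) = −(12r₀²−6r₀+1) log₂(12r₀²−6r₀+1) − 3(6r₀−1−8r₀²) log₂(6r₀−1−8r₀²) − 3(2r₀−1)² log₂((2r₀−1)²) for 1/3 ≤ r₀ < 1/2. Then H attains its maximum on (0,1/2) at r₀ = 1/4; that is, H(r₀) ≤ H(1/4) for all r₀ ∈ (0,1/2). -/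
open Real

/-- The exact Shannon entropy (base 2) of the ensemble of hard RGGs on 3 nodes
placed i.i.d. uniformly on the 1-dimensional unit torus, with connection radius `r₀`. -/
noncomputable def torusEntropy3 (r₀ : ℝ) : ℝ :=
  if r₀ < 1/3 then
    -(1 - 3*r₀)^2 * logb 2 ((1 - 3*r₀)^2)
      - 3 * (2*r₀ - 5*r₀^2) * logb 2 (2*r₀ - 5*r₀^2)
      - 3 * r₀^2 * logb 2 (r₀^2)
      - 3 * r₀^2 * logb 2 (3*r₀^2)
  else
    -(12*r₀^2 - 6*r₀ + 1) * logb 2 (12*r₀^2 - 6*r₀ + 1)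
      - 3 * (6*r₀ - 1 - 8*r₀^2) * logb 2 (6*r₀ - 1 - 8*r₀^2)
      - 3 * (2*r₀ - 1)^2 * logb 2 ((2*r₀ - 1)^2)

/-!
Let `q` be the graph distribution at `r₀ = 1/4`. For `r < 1/3`, the elementary bound
`-p log p ≤ -p log q + (q - p) - (√p - √q)²`, summed over the eight graphs, bounds the entropy by
the cross entropy minus `∑ (√p - √q)²`. With `d = r - 1/4` and natural logarithms, the cross
entropy is `H(1/4) + 12 (log 3) d²`, while the empty, two-edge and complete graphs alone
contribute `9 d² + 3 d² + 3 d²` to the sum of squares; this suffices because `12 log 3 ≤ 15`.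
For `1/3 ≤ r` the empty graph has probability zero, so the entropy is at most `log 7`, which is
already below `H(1/4)`.
-/

lemma negMulLog_le_neg_mul_log_add_sub {p q : ℝ} (hp : 0 ≤ p) (hq : 0 < q) :
    negMulLog p ≤ -p * log q + (q - p) := by
  calc negMulLog p = negMulLog (q * (p / q)) := by rw [mul_div_cancel₀ p hq.ne']
    _ = p / q * negMulLog q + q * negMulLog (p / q) := negMulLog_mul q (p / q)
    _ ≤ p / q * negMulLog q + q * (1 - p / q) := by
      gcongr
      exact negMulLog_le_one_sub_self (by positivity)
    _ = -p * log q + (q - p) := by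
      rw [negMulLog]
      field_simp

lemma negMulLog_sq_le_neg_mul_log_add_sub_sub_sq {a b : ℝ} (ha : 0 ≤ a) (hb : 0 < b) :
    negMulLog (a ^ 2) ≤ -a ^ 2 * log (b ^ 2) + (b ^ 2 - a ^ 2) - (a - b) ^ 2 := by
  calc negMulLog (a ^ 2) = 2 * a * negMulLog a := by rw [sq, negMulLog_mul]; ring
    _ ≤ 2 * a * (-a * log b + (b - a)) := by
      gcongr
      exact negMulLog_le_neg_mul_log_add_sub ha hb
    _ = -a ^ 2 * log (b ^ 2) + (b ^ 2 - a ^ 2) - (a - b) ^ 2 := by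
      rw [log_pow]; push_cast; ring

lemma log_seven_le_log_sixteen_sub : log 7 ≤ log 16 - 3 / 4 * log 3 := by
  have hpow : log (7 ^ 4 * 3 ^ 3) ≤ log (16 ^ 4) := log_le_log (by norm_num) (by norm_num)
  rw [log_mul (by norm_num) (by norm_num), log_pow, log_pow, log_pow] at hpow
  push_cast at hpow
  linarith

lemma torusEntropy3_mul_log_two_of_lt {r : ℝ} (hr : r < 1 / 3) :
    torusEntropy3 r * log 2 =
      negMulLog ((1 - 3 * r) ^ 2) + 3 * negMulLog (2 * r - 5 * r ^ 2) + 3 * negMulLog (r ^ 2)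
        + negMulLog (3 * r ^ 2) := by
  have hlog : log 2 ≠ 0 := (log_pos one_lt_two).ne'
  simp only [torusEntropy3, if_pos hr, logb, negMulLog]
  field_simp
  ring

lemma torusEntropy3_mul_log_two_of_le {r : ℝ} (hr : 1 / 3 ≤ r) :
    torusEntropy3 r * log 2 =
      negMulLog (12 * r ^ 2 - 6 * r + 1) + 3 * negMulLog (6 * r - 1 - 8 * r ^ 2)
        + 3 * negMulLog ((2 * r - 1) ^ 2) := by
  have hlog : log 2 ≠ 0 := (log_pos one_lt_two).ne'
  simp only [torusEntropy3, if_neg hr.not_gt, logb, negMulLog]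
  field_simp
  ring

lemma log_one_div_four_sq : log ((1 / 4 : ℝ) ^ 2) = -log 16 := by
  rw [← log_inv]; norm_num

lemma log_three_div_sixteen : log (3 / 16) = log 3 - log 16 :=
  log_div (by norm_num) (by norm_num)

lemma torusEntropy3_one_div_four_mul_log_two :
    torusEntropy3 (1 / 4) * log 2 = log 16 - 3 / 4 * log 3 := by
  have hedge : (2 * (1 / 4) - 5 * (1 / 4) ^ 2 : ℝ) = 3 / 16 := by norm_num
  have htriangle : (3 * (1 / 4) ^ 2 : ℝ) = 3 / 16 := by norm_num
  have hempty : (1 - 3 * (1 / 4) : ℝ) = 1 / 4 := by norm_num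
  rw [torusEntropy3_mul_log_two_of_lt (by norm_num), hedge, htriangle, hempty]
  simp only [negMulLog, log_one_div_four_sq, log_three_div_sixteen]
  ring

lemma torusEntropy3_mul_log_two_le_of_lt {r : ℝ} (hr₀ : 0 ≤ r) (hr : r < 1 / 3) :
    torusEntropy3 r * log 2 ≤
      log 16 - 3 / 4 * log 3 + (12 * log 3 - 15) * (r - 1 / 4) ^ 2 := by
  have hempty := negMulLog_sq_le_neg_mul_log_add_sub_sub_sq (a := 1 - 3 * r) (b := 1 / 4)
    (by linarith) (by norm_num)
  have hedge := negMulLog_le_neg_mul_log_add_sub (p := 2 * r - 5 * r ^ 2) (q := 3 / 16)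
    (by nlinarith) (by norm_num)
  have hpath := negMulLog_sq_le_neg_mul_log_add_sub_sub_sq (b := 1 / 4) hr₀ (by norm_num)
  have htriangle : negMulLog (3 * r ^ 2) ≤
      -(3 * r ^ 2) * log (3 / 16) + (3 / 16 - 3 * r ^ 2) - 3 * (r - 1 / 4) ^ 2 := by
    have hsq : √3 ^ 2 = 3 := sq_sqrt zero_le_three
    convert negMulLog_sq_le_neg_mul_log_add_sub_sub_sq (a := √3 * r) (b := √3 * (1 / 4))
      (by positivity) (by positivity) using 2
    · rw [mul_pow, hsq]
    · rw [mul_pow, mul_pow, hsq]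
      norm_num
    · rw [← mul_sub, mul_pow, hsq]
  rw [log_one_div_four_sq] at hempty hpath
  rw [log_three_div_sixteen] at hedge htriangle
  rw [torusEntropy3_mul_log_two_of_lt hr]
  linarith

lemma torusEntropy3_mul_log_two_le_log_seven {r : ℝ} (hr : 1 / 3 ≤ r) (hr' : r ≤ 1 / 2) :
    torusEntropy3 r * log 2 ≤ log 7 := by
  have hgibbs : ∀ p : ℝ, 0 ≤ p → negMulLog p ≤ p * log 7 + (1 / 7 - p) := fun p hp ↦ by
    simpa using negMulLog_le_neg_mul_log_add_sub (q := 1 / 7) hp (by norm_num)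
  have htriangle := hgibbs (12 * r ^ 2 - 6 * r + 1) (by nlinarith [sq_nonneg (r - 1 / 4)])
  have hpath := hgibbs (6 * r - 1 - 8 * r ^ 2) (by nlinarith)
  have hedge := hgibbs ((2 * r - 1) ^ 2) (sq_nonneg _)
  rw [torusEntropy3_mul_log_two_of_le hr]
  linarith

theorem stmt_4 : ∀ r₀ ∈ Set.Ioo (0:ℝ) (1/2), torusEntropy3 r₀ ≤ torusEntropy3 (1/4) := by
  rintro r ⟨hr₀, hr₁⟩
  refine le_of_mul_le_mul_right ?_ (log_pos one_lt_two)
  rw [torusEntropy3_one_div_four_mul_log_two]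
  rcases lt_or_ge r (1 / 3) with hr | hr
  · have hgain : (12 * log 3 - 15) * (r - 1 / 4) ^ 2 ≤ 0 :=
      mul_nonpos_of_nonpos_of_nonneg (by linarith [log_three_lt_d9]) (sq_nonneg _)
    linarith [torusEntropy3_mul_log_two_le_of_lt hr₀.le hr]
  · exact (torusEntropy3_mul_log_two_le_log_seven hr hr₁.le).trans
      log_seven_le_log_sixteen_sub
end

section
/- Let X, Y, Z be independent uniformly distributed random variables on [0,1] and let ρ_T(x,y) = min(|x−y|, 1−|x−y|). Then: (i) E[ρ_T(X,Y)²] = 1/12; (ii) E[(ρ_T(X,Y)² − 1/12)²] = 1/180; (iii) E[(ρ_T(X,Y)² − 1/12)(ρ_T(X,Z)² − 1/12)] = 0. -/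
open MeasureTheory

/-!
On `[0, 1]` the function `rhoT` is the distance of the circle `ℝ / ℤ`, whose Haar measure is the
image of the uniform distribution. By translation invariance, the distance from any fixed point to a
uniform point has the same law, namely uniform on `[0, 1/2]`. The first two expectations are then
moments of this law, and the third vanishes because, conditionally on `X`, the distances to `Y` and
`Z` are independent with a mean that does not depend on `X`.
-/

open ProbabilityTheory

theorem intervalIntegral_neg_self_comp_abs (f : ℝ → ℝ) {a : ℝ} (ha : 0 ≤ a) :
    ∫ t in -a..a, f |t| = 2 * ∫ t in 0..a, f t := by
  have indicator_comp_abs (t : ℝ) :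
      (Set.Icc (-a) a).indicator (fun t => f |t|) t = (Set.Iic a).indicator f |t| := by
    simp only [Set.indicator, Set.mem_Icc, Set.mem_Iic, abs_le]
  calc ∫ t in -a..a, f |t|
      = ∫ t, (Set.Icc (-a) a).indicator (fun t => f |t|) t := by
        rw [intervalIntegral.integral_of_le (by linarith), ← integral_Icc_eq_integral_Ioc,
          integral_indicator measurableSet_Icc]
    _ = 2 * ∫ t in Set.Ioi 0, (Set.Iic a).indicator f t := by
        simp only [indicator_comp_abs, integral_comp_abs]
    _ = 2 * ∫ t in 0..a, f t := by
        rw [setIntegral_indicator measurableSet_Iic, Set.Ioi_inter_Iic,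
          intervalIntegral.integral_of_le ha]

section AddCircle

variable {T : ℝ} [hT : Fact (0 < T)]

theorem norm_coe_addCircle_eq_abs {t : ℝ} (ht : |t| ≤ T / 2) : ‖(t : AddCircle T)‖ = |t| :=
  (AddCircle.norm_coe_eq_abs_iff T hT.out.ne').2 (by rwa [abs_of_pos hT.out])

theorem norm_coe_addCircle_eq_min {t : ℝ} (ht : |t| ≤ T) :
    ‖(t : AddCircle T)‖ = min |t| (T - |t|) := by
  rcases le_total |t| (T / 2) with near | far
  · rw [norm_coe_addCircle_eq_abs near, min_eq_left (by linarith)]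
  · have abs_sub_period : |(|t| - T)| = T - |t| := by
      rw [abs_of_nonpos (by linarith), neg_sub]
    calc ‖(t : AddCircle T)‖
        = ‖((|t| : ℝ) : AddCircle T)‖ := by
          rcases abs_choice t with h | h <;> simp only [h, AddCircle.coe_neg, norm_neg]
      _ = ‖((|t| - T : ℝ) : AddCircle T)‖ := by
          rw [AddCircle.coe_sub, AddCircle.coe_period, sub_zero]
      _ = T - |t| := by
          rw [norm_coe_addCircle_eq_abs (by linarith), abs_sub_period]
      _ = min |t| (T - |t|) := (min_eq_right (by linarith)).symm

theorem integral_addCircle_comp_norm (f : ℝ → ℝ) :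
    ∫ b : AddCircle T, f ‖b‖ = 2 * ∫ t in 0..T / 2, f t := by
  have half_period_pos : 0 < T / 2 := half_pos hT.out
  have comp_norm_coe : ∀ t ∈ Set.uIcc (-(T / 2)) (T / 2), f ‖(t : AddCircle T)‖ = f |t| := by
    intro t ht
    rw [Set.uIcc_of_le (by linarith), Set.mem_Icc, ← abs_le] at ht
    rw [norm_coe_addCircle_eq_abs ht]
  calc ∫ b : AddCircle T, f ‖b‖
      = ∫ t in -(T / 2)..T / 2, f ‖(t : AddCircle T)‖ := by
        rw [← AddCircle.intervalIntegral_preimage T (-(T / 2)), show -(T / 2) + T = T / 2 by ring]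
    _ = ∫ t in -(T / 2)..T / 2, f |t| := intervalIntegral.integral_congr comp_norm_coe
    _ = 2 * ∫ t in 0..T / 2, f t := intervalIntegral_neg_self_comp_abs f half_period_pos.le

theorem integral_addCircle_comp_dist (f : ℝ → ℝ) (x : AddCircle T) :
    ∫ b, f (dist x b) = 2 * ∫ t in 0..T / 2, f t := by
  simp only [dist_eq_norm]
  rw [integral_sub_left_eq_self (fun b : AddCircle T => f ‖b‖) volume x,
    integral_addCircle_comp_norm]

theorem integral_addCircle_dist_pow (x : AddCircle T) (n : ℕ) :
    ∫ b, dist x b ^ n = T ^ (n + 1) / (2 ^ n * (n + 1)) := by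
  rw [integral_addCircle_comp_dist (· ^ n), integral_pow, div_pow]
  field_simp
  ring

end AddCircle

instance isProbabilityMeasure_volume_unitAddCircle :
    IsProbabilityMeasure (volume : Measure UnitAddCircle) :=
  ⟨UnitAddCircle.measure_univ⟩

theorem variance_unitAddCircle_dist_pow (x : UnitAddCircle) (n : ℕ) :
    Var[fun b => dist x b ^ n] = n ^ 2 / (4 ^ n * (2 * n + 1) * (n + 1) ^ 2) := by
  have memLp_dist_pow : MemLp (fun b => dist x b ^ n) 2 :=
    Continuous.memLp_of_hasCompactSupport (by fun_prop) (.of_compactSpace _)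
  have four_pow : (4 : ℝ) ^ n = 2 ^ (n * 2) := by rw [mul_comm, pow_mul]; norm_num
  rw [variance_eq_sub memLp_dist_pow]
  simp only [Pi.pow_apply, ← pow_mul, integral_addCircle_dist_pow, one_pow, four_pow]
  push_cast
  field_simp
  ring

theorem rhoT_eq_dist {x y : ℝ} (hxy : |x - y| ≤ 1) : rhoT x y = dist (x : UnitAddCircle) y := by
  rw [dist_eq_norm, ← AddCircle.coe_sub, norm_coe_addCircle_eq_min hxy, rhoT]

theorem setIntegral_comp_rhoT {x : ℝ} (hx : x ∈ Set.Icc (0 : ℝ) 1) (f : ℝ → ℝ) :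
    ∫ y in Set.Icc (0 : ℝ) 1, f (rhoT x y) = ∫ b, f (dist (x : UnitAddCircle) b) := by
  have comp_rhoT : ∀ y ∈ Set.Icc (0 : ℝ) 1, f (rhoT x y) = f (dist (x : UnitAddCircle) y) :=
    fun y hy => by rw [rhoT_eq_dist (by simpa using abs_sub_le_of_le_of_le hx.1 hx.2 hy.1 hy.2)]
  rw [setIntegral_congr_fun measurableSet_Icc comp_rhoT, integral_Icc_eq_integral_Ioc,
    ← UnitAddCircle.integral_preimage 0, zero_add]

theorem setIntegral_rhoT_sq {x : ℝ} (hx : x ∈ Set.Icc (0 : ℝ) 1) :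
    ∫ y in Set.Icc (0 : ℝ) 1, rhoT x y ^ 2 = 1 / 12 := by
  rw [setIntegral_comp_rhoT hx (· ^ 2), integral_addCircle_dist_pow]
  norm_num

theorem setIntegral_rhoT_sq_sub_mean {x : ℝ} (hx : x ∈ Set.Icc (0 : ℝ) 1) :
    ∫ y in Set.Icc (0 : ℝ) 1, (rhoT x y ^ 2 - 1 / 12) = 0 := by
  have integrable_rhoT_sq : IntegrableOn (fun y => rhoT x y ^ 2) (Set.Icc 0 1) :=
    Continuous.integrableOn_Icc (by unfold rhoT; fun_prop)
  rw [integral_sub integrable_rhoT_sq (integrable_const _), setIntegral_rhoT_sq hx]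
  simp

theorem setIntegral_sq_rhoT_sq_sub_mean {x : ℝ} (hx : x ∈ Set.Icc (0 : ℝ) 1) :
    ∫ y in Set.Icc (0 : ℝ) 1, (rhoT x y ^ 2 - 1 / 12) ^ 2 = 1 / 180 := by
  have mean_dist_sq : ∫ b, dist (x : UnitAddCircle) b ^ 2 = 1 / 12 := by
    rw [integral_addCircle_dist_pow]; norm_num
  calc ∫ y in Set.Icc (0 : ℝ) 1, (rhoT x y ^ 2 - 1 / 12) ^ 2
      = ∫ b, (dist (x : UnitAddCircle) b ^ 2 - 1 / 12) ^ 2 :=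
        setIntegral_comp_rhoT hx fun t => (t ^ 2 - 1 / 12) ^ 2
    _ = Var[fun b => dist (x : UnitAddCircle) b ^ 2] := by
        rw [variance_eq_integral (by fun_prop), mean_dist_sq]
    _ = 1 / 180 := by
        rw [variance_unitAddCircle_dist_pow]; norm_num

/-- For `X, Y, Z` i.i.d. uniform on `[0,1]`:
(i) `E[ρ_T(X,Y)²] = 1/12`;
(ii) `E[(ρ_T(X,Y)² − 1/12)²] = 1/180`;
(iii) `E[(ρ_T(X,Y)² − 1/12)(ρ_T(X,Z)² − 1/12)] = 0`. -/
theorem stmt_5 :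
    (∫ x in Set.Icc (0:ℝ) 1, ∫ y in Set.Icc (0:ℝ) 1, rhoT x y ^ 2 = 1/12) ∧
    (∫ x in Set.Icc (0:ℝ) 1, ∫ y in Set.Icc (0:ℝ) 1, (rhoT x y ^ 2 - 1/12) ^ 2 = 1/180) ∧
    (∫ x in Set.Icc (0:ℝ) 1, ∫ y in Set.Icc (0:ℝ) 1, ∫ z in Set.Icc (0:ℝ) 1,
        (rhoT x y ^ 2 - 1/12) * (rhoT x z ^ 2 - 1/12) = 0) := by
  refine ⟨?mean, ?variance, ?covariance⟩
  case mean =>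
    rw [setIntegral_congr_fun measurableSet_Icc fun x hx => setIntegral_rhoT_sq hx]
    simp
  case variance =>
    rw [setIntegral_congr_fun measurableSet_Icc fun x hx => setIntegral_sq_rhoT_sq_sub_mean hx]
    simp
  case covariance =>
    refine setIntegral_eq_zero_of_forall_eq_zero fun x hx => ?_
    simp only [integral_const_mul, setIntegral_rhoT_sq_sub_mean hx, mul_zero, integral_zero]
end

section
/- Let X, Y, Z be i.i.d. real-valued random variables with finite fourth moment, and let μ = E[(X−Y)²]. Then E[((X−Y)² − μ)((Y−Z)² − μ)] = E[(Y − E[Y])⁴] − (E[(Y − E[Y])²])². In particular, this covariance is zero if and only if the kurtosis of the common distribution equals 1, and it is strictly positive whenever the kurtosis exceeds 1. -/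
open MeasureTheory ProbabilityTheory

/-!
Conditionally on `Y`, the squared distances `‖X - Y‖²` and `‖Y - Z‖²` are independent. If `X` and
`Z` have mean `m`, then by the bias-variance decomposition their conditional expectations are both
`‖Y - m‖²` plus a constant, so their covariance is the variance of `‖Y - m‖²`.
-/

section Independence

variable {Ω α β γ F 𝕜 : Type*} [MeasurableSpace Ω] [MeasurableSpace α] [MeasurableSpace β]
  [MeasurableSpace γ] [NormedAddCommGroup F] [RCLike 𝕜]
  {P : Measure Ω} [IsFiniteMeasure P] {X : Ω → α} {Y : Ω → β} {Z : Ω → γ}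

theorem integrable_uncurry_map_prod_map_of_indepFun {f : α → β → F} (hXY : IndepFun X Y P)
    (hX : AEMeasurable X P) (hY : AEMeasurable Y P)
    (hf : StronglyMeasurable (Function.uncurry f))
    (hfint : Integrable (fun ω => f (X ω) (Y ω)) P) :
    Integrable (Function.uncurry f) ((P.map X).prod (P.map Y)) := by
  rw [← (indepFun_iff_map_prod_eq_prod_map_map hX hY).1 hXY]
  exact (integrable_map_measure hf.aestronglyMeasurable (hX.prodMk hY)).2 hfint

variable [NormedSpace ℝ F]

theorem integrable_integral_map_of_indepFun {f : α → β → F} (hXY : IndepFun X Y P)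
    (hX : AEMeasurable X P) (hY : AEMeasurable Y P)
    (hf : StronglyMeasurable (Function.uncurry f))
    (hfint : Integrable (fun ω => f (X ω) (Y ω)) P) :
    Integrable (fun ω => ∫ x, f x (Y ω) ∂P.map X) P :=
  (integrable_uncurry_map_prod_map_of_indepFun hXY hX hY hf hfint).integral_prod_right
    |>.comp_aemeasurable hY

theorem integral_eq_integral_integral_map_of_indepFun {f : α → β → F} (hXY : IndepFun X Y P)
    (hX : AEMeasurable X P) (hY : AEMeasurable Y P)
    (hf : StronglyMeasurable (Function.uncurry f))
    (hfint : Integrable (fun ω => f (X ω) (Y ω)) P) :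
    ∫ ω, f (X ω) (Y ω) ∂P = ∫ ω, ∫ x, f x (Y ω) ∂P.map X ∂P := by
  have hprod := integrable_uncurry_map_prod_map_of_indepFun hXY hX hY hf hfint
  calc ∫ ω, f (X ω) (Y ω) ∂P
      = ∫ p, Function.uncurry f p ∂(P.map fun ω => (X ω, Y ω)) :=
        (integral_map (hX.prodMk hY) hf.aestronglyMeasurable).symm
    _ = ∫ y, ∫ x, f x y ∂P.map X ∂P.map Y := by
        rw [(indepFun_iff_map_prod_eq_prod_map_map hX hY).1 hXY, integral_prod_symm _ hprod]
        rfl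
    _ = ∫ ω, ∫ x, f x (Y ω) ∂P.map X ∂P :=
        integral_map hY hprod.integral_prod_right.aestronglyMeasurable

theorem integral_mul_eq_integral_integral_map_mul_integral_map {f : α → β → 𝕜} {g : β → γ → 𝕜}
    (hXYZ : IndepFun X (fun ω => (Y ω, Z ω)) P) (hYZ : IndepFun Y Z P)
    (hX : AEMeasurable X P) (hY : AEMeasurable Y P) (hZ : AEMeasurable Z P)
    (hf : StronglyMeasurable (Function.uncurry f)) (hg : StronglyMeasurable (Function.uncurry g))
    (hfg : Integrable (fun ω => f (X ω) (Y ω) * g (Y ω) (Z ω)) P) :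
    ∫ ω, f (X ω) (Y ω) * g (Y ω) (Z ω) ∂P
      = ∫ ω, (∫ x, f x (Y ω) ∂P.map X) * ∫ z, g (Y ω) z ∂P.map Z ∂P := by
  have hfg_meas : StronglyMeasurable
      (Function.uncurry fun (x : α) (p : β × γ) => f x p.1 * g p.1 p.2) :=
    (hf.comp_measurable (g := fun q : α × β × γ => (q.1, q.2.1)) (by fun_prop)).mul
      (hg.comp_measurable (g := fun q : α × β × γ => q.2) (by fun_prop))
  have hFg_meas : StronglyMeasurable
      (Function.uncurry fun (z : γ) (y : β) => (∫ x, f x y ∂P.map X) * g y z) :=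
    (hf.integral_prod_left.comp_measurable measurable_snd).mul
      (hg.comp_measurable measurable_swap)
  have hFg : Integrable (fun ω => (∫ x, f x (Y ω) ∂P.map X) * g (Y ω) (Z ω)) P := by
    simpa only [integral_mul_const] using
      integrable_integral_map_of_indepFun hXYZ hX (hY.prodMk hZ) hfg_meas hfg
  calc ∫ ω, f (X ω) (Y ω) * g (Y ω) (Z ω) ∂P
      = ∫ ω, (∫ x, f x (Y ω) ∂P.map X) * g (Y ω) (Z ω) ∂P := by
        simpa only [integral_mul_const] using
          integral_eq_integral_integral_map_of_indepFun hXYZ hX (hY.prodMk hZ) hfg_meas hfg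
    _ = ∫ ω, (∫ x, f x (Y ω) ∂P.map X) * ∫ z, g (Y ω) z ∂P.map Z ∂P := by
        simpa only [integral_const_mul] using
          integral_eq_integral_integral_map_of_indepFun hYZ.symm hZ hY hFg_meas hFg

end Independence

theorem integral_sub_integral_mul_add_const {Ω : Type*} [MeasurableSpace Ω] {P : Measure Ω}
    [IsProbabilityMeasure P] {W : Ω → ℝ} (hW : MemLp W 2 P) (c : ℝ) :
    ∫ ω, (W ω - P[W]) * (W ω + c) ∂P = ∫ ω, W ω ^ 2 ∂P - P[W] ^ 2 := by
  have hW1 : Integrable W P := hW.integrable one_le_two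
  have hW2 : Integrable (fun ω => W ω ^ 2) P := hW.integrable_sq
  calc ∫ ω, (W ω - P[W]) * (W ω + c) ∂P
      = ∫ ω, W ω ^ 2 + (c - P[W]) * W ω - P[W] * c ∂P := by congr with ω; ring
    _ = ∫ ω, W ω ^ 2 ∂P + (c - P[W]) * P[W] - P[W] * c := by
        rw [integral_sub (by fun_prop) (by fun_prop), integral_add (by fun_prop) (by fun_prop),
          integral_const_mul, integral_const, probReal_univ, one_smul]
    _ = ∫ ω, W ω ^ 2 ∂P - P[W] ^ 2 := by ring

section SquaredDistances

variable {Ω E : Type*} [MeasurableSpace Ω] {P : Measure Ω} [NormedAddCommGroup E] {X Y Z : Ω → E}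

theorem memLp_norm_sq {p : ENNReal} (hY : MemLp Y (2 * p) P) :
    MemLp (fun ω => ‖Y ω‖ ^ 2) p P := by
  simpa [ENNReal.mul_div_right_comm, ENNReal.div_self] using hY.norm_rpow_div 2

theorem integrable_norm_sub_sq (hX : MemLp X 2 P) (hY : MemLp Y 2 P) :
    Integrable (fun ω => ‖X ω - Y ω‖ ^ 2) P :=
  (hX.sub hY).integrable_norm_pow two_ne_zero

theorem norm_sub_sq_le_two_mul (x y : E) : ‖x - y‖ ^ 2 ≤ 2 * (‖x‖ ^ 2 + ‖y‖ ^ 2) :=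
  calc ‖x - y‖ ^ 2 ≤ (‖x‖ + ‖y‖) ^ 2 := by gcongr; exact norm_sub_le x y
    _ ≤ 2 * (‖x‖ ^ 2 + ‖y‖ ^ 2) := add_sq_le

theorem integrable_norm_sub_sq_mul_norm_sub_sq [IsFiniteMeasure P]
    [MeasurableSpace E] [BorelSpace E]
    (hXYZ : IndepFun X (fun ω => (Y ω, Z ω)) P) (hYZ : IndepFun Y Z P)
    (hX : MemLp X 2 P) (hY : MemLp Y 4 P) (hZ : MemLp Z 2 P) :
    Integrable (fun ω => ‖X ω - Y ω‖ ^ 2 * ‖Y ω - Z ω‖ ^ 2) P := by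
  have hXsq : Integrable (fun ω => ‖X ω‖ ^ 2) P := hX.integrable_norm_pow two_ne_zero
  have hZsq : Integrable (fun ω => ‖Z ω‖ ^ 2) P := hZ.integrable_norm_pow two_ne_zero
  have hYsq : MemLp (fun ω => ‖Y ω‖ ^ 2) 2 P := memLp_norm_sq (by norm_num [hY])
  have hYYsq : Integrable (fun ω => ‖Y ω‖ ^ 2 * ‖Y ω‖ ^ 2) P := hYsq.integrable_mul hYsq
  have hYZsq : Integrable (fun ω => ‖Y ω‖ ^ 2 * ‖Z ω‖ ^ 2) P :=
    (hYZ.comp (φ := fun y => ‖y‖ ^ 2) (ψ := fun z => ‖z‖ ^ 2) (by fun_prop)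
      (by fun_prop)).integrable_mul (hYsq.integrable one_le_two) hZsq
  have hXYZsq : Integrable (fun ω => ‖X ω‖ ^ 2 * (‖Y ω‖ ^ 2 + ‖Z ω‖ ^ 2)) P :=
    (hXYZ.comp (φ := fun x => ‖x‖ ^ 2) (ψ := fun p : E × E => ‖p.1‖ ^ 2 + ‖p.2‖ ^ 2)
      (by fun_prop) (by fun_prop)).integrable_mul hXsq ((hYsq.integrable one_le_two).add hZsq)
  refine ((hXYZsq.add (hYYsq.add hYZsq)).const_mul 4).mono' ?_ (ae_of_all _ fun ω => ?_)
  · exact ((hX.1.sub hY.1).norm.pow 2).mul ((hY.1.sub hZ.1).norm.pow 2)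
  calc ‖‖X ω - Y ω‖ ^ 2 * ‖Y ω - Z ω‖ ^ 2‖ = ‖X ω - Y ω‖ ^ 2 * ‖Y ω - Z ω‖ ^ 2 :=
        Real.norm_of_nonneg (by positivity)
    _ ≤ (2 * (‖X ω‖ ^ 2 + ‖Y ω‖ ^ 2)) * (2 * (‖Y ω‖ ^ 2 + ‖Z ω‖ ^ 2)) := by
        gcongr <;> exact norm_sub_sq_le_two_mul _ _
    _ = 4 * (‖X ω‖ ^ 2 * (‖Y ω‖ ^ 2 + ‖Z ω‖ ^ 2) +
          (‖Y ω‖ ^ 2 * ‖Y ω‖ ^ 2 + ‖Y ω‖ ^ 2 * ‖Z ω‖ ^ 2)) := by ring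

theorem integrable_norm_sub_sq_sub_const_mul_norm_sub_sq_sub_const [IsFiniteMeasure P]
    [MeasurableSpace E] [BorelSpace E]
    (hXYZ : IndepFun X (fun ω => (Y ω, Z ω)) P) (hYZ : IndepFun Y Z P)
    (hX : MemLp X 2 P) (hY : MemLp Y 4 P) (hZ : MemLp Z 2 P) (a b : ℝ) :
    Integrable (fun ω => (‖X ω - Y ω‖ ^ 2 - a) * (‖Y ω - Z ω‖ ^ 2 - b)) P := by
  have hY2 : MemLp Y 2 P := hY.mono_exponent (by norm_num)
  have hprod := integrable_norm_sub_sq_mul_norm_sub_sq hXYZ hYZ hX hY hZ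
  have hleft := (integrable_norm_sub_sq hX hY2).mul_const b
  have hright := ((integrable_norm_sub_sq hY2 hZ).sub (integrable_const b)).const_mul a
  refine ((hprod.sub hleft).sub hright).congr (ae_of_all _ fun ω => ?_)
  simp only [Pi.sub_apply]
  ring

variable [IsProbabilityMeasure P] [InnerProductSpace ℝ E] [CompleteSpace E]

theorem integral_norm_sub_const_sq (hX : MemLp X 2 P) (y : E) :
    ∫ ω, ‖X ω - y‖ ^ 2 ∂P = ‖y - P[X]‖ ^ 2 + ∫ ω, ‖X ω - P[X]‖ ^ 2 ∂P := by
  have hcentered : MemLp (fun ω => X ω - P[X]) 2 P := hX.sub (memLp_const _)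
  have hint : Integrable (fun ω => X ω - P[X]) P := hcentered.integrable one_le_two
  have hinner : Integrable (fun ω => 2 * inner ℝ (y - P[X]) (X ω - P[X])) P :=
    (hint.const_inner _).const_mul 2
  have hcross : ∫ ω, inner ℝ (y - P[X]) (X ω - P[X]) ∂P = 0 := by
    rw [integral_inner hint, integral_sub (hX.integrable one_le_two) (integrable_const _)]
    simp
  calc ∫ ω, ‖X ω - y‖ ^ 2 ∂P
      = ∫ ω, ‖y - P[X]‖ ^ 2 - 2 * inner ℝ (y - P[X]) (X ω - P[X]) + ‖X ω - P[X]‖ ^ 2 ∂P := by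
        congr with ω
        rw [← norm_sub_sq_real, sub_sub_sub_cancel_right, norm_sub_rev]
    _ = ‖y - P[X]‖ ^ 2 + ∫ ω, ‖X ω - P[X]‖ ^ 2 ∂P := by
        rw [integral_add (by fun_prop) (hcentered.integrable_norm_pow two_ne_zero),
          integral_sub (by fun_prop) hinner, integral_const_mul, hcross]
        simp

variable [MeasurableSpace E] [BorelSpace E] [SecondCountableTopology E]

theorem integral_map_norm_sub_const_sq_sub_const (hX : MemLp X 2 P) (y : E) (a : ℝ) :
    ∫ x, (‖x - y‖ ^ 2 - a) ∂P.map X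
      = ‖y - P[X]‖ ^ 2 + (∫ ω, ‖X ω - P[X]‖ ^ 2 ∂P - a) := by
  rw [integral_map hX.1.aemeasurable (by fun_prop),
    integral_sub (integrable_norm_sub_sq hX (memLp_const y)) (integrable_const a),
    integral_norm_sub_const_sq hX]
  simp [add_sub_assoc]

theorem integral_norm_sub_sq_of_indepFun (hXY : IndepFun X Y P)
    (hX : MemLp X 2 P) (hY : MemLp Y 2 P) :
    ∫ ω, ‖X ω - Y ω‖ ^ 2 ∂P
      = ∫ ω, ‖Y ω - P[X]‖ ^ 2 ∂P + ∫ ω, ‖X ω - P[X]‖ ^ 2 ∂P := by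
  have hmap (y : E) : ∫ x, ‖x - y‖ ^ 2 ∂P.map X
      = ‖y - P[X]‖ ^ 2 + ∫ ω, ‖X ω - P[X]‖ ^ 2 ∂P := by
    rw [integral_map hX.1.aemeasurable (by fun_prop), integral_norm_sub_const_sq hX]
  rw [integral_eq_integral_integral_map_of_indepFun (f := fun x y => ‖x - y‖ ^ 2) hXY
    hX.1.aemeasurable hY.1.aemeasurable (by fun_prop) (integrable_norm_sub_sq hX hY)]
  simp_rw [hmap]
  rw [integral_add (integrable_norm_sub_sq hY (memLp_const _)) (integrable_const _)]
  simp

theorem integral_norm_sub_sq_sub_const_mul_norm_sub_sq_sub_const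
    (hXYZ : IndepFun X (fun ω => (Y ω, Z ω)) P) (hYZ : IndepFun Y Z P)
    (hX : MemLp X 2 P) (hY : MemLp Y 4 P) (hZ : MemLp Z 2 P) (a b : ℝ) :
    ∫ ω, (‖X ω - Y ω‖ ^ 2 - a) * (‖Y ω - Z ω‖ ^ 2 - b) ∂P
      = ∫ ω, (‖Y ω - P[X]‖ ^ 2 + (∫ ω', ‖X ω' - P[X]‖ ^ 2 ∂P - a)) *
          (‖Y ω - P[Z]‖ ^ 2 + (∫ ω', ‖Z ω' - P[Z]‖ ^ 2 ∂P - b)) ∂P := by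
  rw [integral_mul_eq_integral_integral_map_mul_integral_map
    (f := fun x y => ‖x - y‖ ^ 2 - a) (g := fun y z => ‖y - z‖ ^ 2 - b) hXYZ hYZ
    hX.1.aemeasurable hY.1.aemeasurable hZ.1.aemeasurable (by fun_prop) (by fun_prop)
    (integrable_norm_sub_sq_sub_const_mul_norm_sub_sq_sub_const hXYZ hYZ hX hY hZ a b)]
  simp_rw [norm_sub_rev (Y _), integral_map_norm_sub_const_sq_sub_const hX,
    integral_map_norm_sub_const_sq_sub_const hZ, norm_sub_rev (Y _)]

-- Centring the first factor alone makes the integral a covariance, so `c` is arbitrary.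
theorem integral_norm_sub_sq_sub_integral_mul_norm_sub_sq_sub_const
    (hXYZ : IndepFun X (fun ω => (Y ω, Z ω)) P) (hYZ : IndepFun Y Z P)
    (hX : MemLp X 2 P) (hY : MemLp Y 4 P) (hZ : MemLp Z 2 P) (hXZ : P[X] = P[Z]) (c : ℝ) :
    ∫ ω, (‖X ω - Y ω‖ ^ 2 - ∫ ω', ‖X ω' - Y ω'‖ ^ 2 ∂P) * (‖Y ω - Z ω‖ ^ 2 - c) ∂P
      = ∫ ω, ‖Y ω - P[X]‖ ^ 4 ∂P - (∫ ω, ‖Y ω - P[X]‖ ^ 2 ∂P) ^ 2 := by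
  have hXY : IndepFun X Y P := hXYZ.comp measurable_id measurable_fst
  have hcentered : MemLp (fun ω => Y ω - P[X]) 4 P := hY.sub (memLp_const _)
  have hsq : MemLp (fun ω => ‖Y ω - P[X]‖ ^ 2) 2 P := memLp_norm_sq (by norm_num [hcentered])
  have hcov := integral_sub_integral_mul_add_const hsq (∫ ω, ‖Z ω - P[X]‖ ^ 2 ∂P - c)
  simp only [← pow_mul] at hcov
  rw [integral_norm_sub_sq_sub_const_mul_norm_sub_sq_sub_const hXYZ hYZ hX hY hZ,
    integral_norm_sub_sq_of_indepFun hXY hX (hY.mono_exponent (by norm_num)), ← hXZ]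
  simpa only [sub_add_cancel_right, ← sub_eq_add_neg] using hcov

theorem stmt_7_general (hindep : iIndepFun ![X, Y, Z] P)
    (hX : MemLp X 2 P) (hY : MemLp Y 4 P) (hZ : MemLp Z 2 P)
    {m : E} (hXm : m = ∫ ω, X ω ∂P) (hZm : m = ∫ ω, Z ω ∂P)
    {μ : ℝ} (hμ : μ = ∫ ω, ‖X ω - Y ω‖ ^ 2 ∂P) (c : ℝ) :
    ((∫ ω, (‖X ω - Y ω‖ ^ 2 - μ) * (‖Y ω - Z ω‖ ^ 2 - c) ∂P)
        = (∫ ω, ‖Y ω - m‖ ^ 4 ∂P) - (∫ ω, ‖Y ω - m‖ ^ 2 ∂P) ^ 2) ∧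
    ((∫ ω, ‖Y ω - m‖ ^ 2 ∂P) ≠ 0 →
      (((∫ ω, (‖X ω - Y ω‖ ^ 2 - μ) * (‖Y ω - Z ω‖ ^ 2 - c) ∂P) = 0 ↔
          (∫ ω, ‖Y ω - m‖ ^ 4 ∂P) / ((∫ ω, ‖Y ω - m‖ ^ 2 ∂P) ^ 2) = 1) ∧
        ((∫ ω, ‖Y ω - m‖ ^ 4 ∂P) / ((∫ ω, ‖Y ω - m‖ ^ 2 ∂P) ^ 2) > 1 →
          0 < ∫ ω, (‖X ω - Y ω‖ ^ 2 - μ) * (‖Y ω - Z ω‖ ^ 2 - c) ∂P))) := by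
  have hmeas : ∀ i, AEMeasurable (![X, Y, Z] i) P := by
    simp [Fin.forall_fin_succ, hX.1.aemeasurable, hY.1.aemeasurable, hZ.1.aemeasurable]
  have hXYZ : IndepFun X (fun ω => (Y ω, Z ω)) P :=
    (hindep.indepFun_prodMk₀ hmeas 1 2 0 (by decide) (by decide)).symm
  have hYZ : IndepFun Y Z P := hindep.indepFun (show (1 : Fin 3) ≠ 2 by decide)
  have hcov : ∫ ω, (‖X ω - Y ω‖ ^ 2 - μ) * (‖Y ω - Z ω‖ ^ 2 - c) ∂P
      = (∫ ω, ‖Y ω - m‖ ^ 4 ∂P) - (∫ ω, ‖Y ω - m‖ ^ 2 ∂P) ^ 2 := by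
    rw [hμ, hXm]
    exact integral_norm_sub_sq_sub_integral_mul_norm_sub_sq_sub_const hXYZ hYZ hX hY hZ
      (hXm.symm.trans hZm) c
  refine ⟨hcov, fun hvar => ?_⟩
  have hvar_sq : 0 < (∫ ω, ‖Y ω - m‖ ^ 2 ∂P) ^ 2 := by positivity
  rw [hcov, div_eq_one_iff_eq hvar_sq.ne', sub_eq_zero, gt_iff_lt, one_lt_div hvar_sq, sub_pos]
  exact ⟨Iff.rfl, id⟩

end SquaredDistances

/-- For `X, Y, Z` i.i.d. real random variables with finite fourth moment and
`μ = E[(X−Y)²]`, one has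
`E[((X−Y)² − μ)((Y−Z)² − μ)] = E[(Y−EY)⁴] − (E[(Y−EY)²])²`.
In particular (when the variance is nonzero) this covariance vanishes iff the
kurtosis equals 1, and is strictly positive whenever the kurtosis exceeds 1. -/
theorem stmt_7 {Ω : Type*} [MeasurableSpace Ω] (P : Measure Ω) [IsProbabilityMeasure P]
    (X Y Z : Ω → ℝ)
    (hindep : iIndepFun ![X, Y, Z] P)
    (hXY : Measure.map X P = Measure.map Y P)
    (hXZ : Measure.map X P = Measure.map Z P)
    (hX : Measurable X) (hY : Measurable Y) (hZ : Measurable Z)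
    (hL4 : MemLp X 4 P)
    (μ m : ℝ)
    (hμ : μ = ∫ ω, (X ω - Y ω) ^ 2 ∂P)
    (hm : m = ∫ ω, Y ω ∂P) :
    ((∫ ω, ((X ω - Y ω) ^ 2 - μ) * ((Y ω - Z ω) ^ 2 - μ) ∂P)
        = (∫ ω, (Y ω - m) ^ 4 ∂P) - (∫ ω, (Y ω - m) ^ 2 ∂P) ^ 2) ∧
    ((∫ ω, (Y ω - m) ^ 2 ∂P) ≠ 0 →
      (((∫ ω, ((X ω - Y ω) ^ 2 - μ) * ((Y ω - Z ω) ^ 2 - μ) ∂P) = 0 ↔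
          (∫ ω, (Y ω - m) ^ 4 ∂P) / ((∫ ω, (Y ω - m) ^ 2 ∂P) ^ 2) = 1) ∧
        ((∫ ω, (Y ω - m) ^ 4 ∂P) / ((∫ ω, (Y ω - m) ^ 2 ∂P) ^ 2) > 1 →
          0 < ∫ ω, ((X ω - Y ω) ^ 2 - μ) * ((Y ω - Z ω) ^ 2 - μ) ∂P))) := by
  have hdistXY : IdentDistrib X Y P P := ⟨hX.aemeasurable, hY.aemeasurable, hXY⟩
  have hdistXZ : IdentDistrib X Z P P := ⟨hX.aemeasurable, hZ.aemeasurable, hXZ⟩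
  have hX2 : MemLp X 2 P := hL4.mono_exponent (by norm_num)
  have hXm : m = ∫ ω, X ω ∂P := hm.trans hdistXY.integral_eq.symm
  simpa only [Real.norm_eq_abs, sq_abs, Even.pow_abs (show Even 4 by decide)] using
    stmt_7_general hindep hX2 (hdistXY.memLp_iff.1 hL4) (hdistXZ.memLp_iff.1 hX2) hXm
      (hXm.trans hdistXZ.integral_eq) (by simpa only [Real.norm_eq_abs, sq_abs] using hμ) μ
end

section
/- Let X be a real-valued random variable with finite fourth moment, mean μ = E[X], and suppose E[(X−μ)⁴] = (E[(X−μ)²])². Then there exists a constant c ≥ 0 such that X ∈ {μ−c, μ+c} almost surely; moreover, if X is not almost surely constant, then c > 0 and P(X = μ−c) = P(X = μ+c) = 1/2. -/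
open MeasureTheory

/-!
Equality of the fourth central moment with the squared variance says that `(X - μ) ^ 2` has
variance zero, so it is almost surely equal to its mean `c ^ 2`, i.e. `X = μ ± c`. A random variable
with two distinct values has its distribution determined by its mean; since `μ` is the midpoint of
`μ - c` and `μ + c`, both values have probability `1 / 2`.
-/

section TwoPoint

variable {Ω : Type*} [MeasurableSpace Ω] {P : Measure Ω} {X : Ω → ℝ}

lemma memLp_sq_of_memLp_two_mul {p : ENNReal} (hX : MemLp X (2 * p) P) :
    MemLp (fun ω ↦ X ω ^ 2) p P := by
  have holder : ENNReal.HolderTriple (2 * p) (2 * p) p :=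
    ⟨by rw [← two_mul, ENNReal.mul_inv (by simp) (by simp), ← mul_assoc,
      ENNReal.mul_inv_cancel (by simp) (by simp), one_mul]⟩
  simpa only [sq] using hX.mul' hX

variable [IsProbabilityMeasure P]

lemma ae_eq_integral_of_integral_sq_eq_sq_integral (hX : MemLp X 2 P)
    (h : ∫ ω, X ω ^ 2 ∂P = (∫ ω, X ω ∂P) ^ 2) : ∀ᵐ ω ∂P, X ω = ∫ ω, X ω ∂P :=
  ProbabilityTheory.ae_eq_integral_of_variance_eq_zero hX <|
    (ProbabilityTheory.variance_eq_sub hX).trans (sub_eq_zero.2 h)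

lemma ae_eq_sub_sqrt_or_eq_add_sqrt_of_integral_pow_four_eq {a : ℝ} (hX : MemLp X 4 P)
    (h : ∫ ω, (X ω - a) ^ 4 ∂P = (∫ ω, (X ω - a) ^ 2 ∂P) ^ 2) :
    ∀ᵐ ω ∂P, X ω = a - √(∫ ω, (X ω - a) ^ 2 ∂P) ∨ X ω = a + √(∫ ω, (X ω - a) ^ 2 ∂P) := by
  have four_eq : (4 : ENNReal) = 2 * 2 := by norm_num
  have sq_memLp : MemLp (fun ω ↦ (X ω - a) ^ 2) 2 P :=
    memLp_sq_of_memLp_two_mul (four_eq ▸ hX.sub (memLp_const a))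
  have second_moment_nonneg : 0 ≤ ∫ ω, (X ω - a) ^ 2 ∂P := integral_nonneg fun _ ↦ sq_nonneg _
  have sq_ae_const : ∀ᵐ ω ∂P, (X ω - a) ^ 2 = ∫ ω, (X ω - a) ^ 2 ∂P :=
    ae_eq_integral_of_integral_sq_eq_sq_integral sq_memLp (by simpa only [← pow_mul] using h)
  filter_upwards [sq_ae_const] with ω hω
  rw [← Real.sq_sqrt second_moment_nonneg, sq_eq_sq_iff_eq_or_eq_neg] at hω
  rcases hω with hpos | hneg
  · exact .inr (by linarith)
  · exact .inl (by linarith)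

lemma measureReal_eq_div_of_ae_eq_or_eq {a b : ℝ} (hX : AEMeasurable X P) (hab : a ≠ b)
    (h : ∀ᵐ ω ∂P, X ω = a ∨ X ω = b) :
    P.real {ω | X ω = b} = ((∫ ω, X ω ∂P) - a) / (b - a) := by
  have event : NullMeasurableSet {ω | X ω = b} P :=
    hX.nullMeasurableSet_preimage (measurableSet_singleton b)
  have ae_eq_indicator : X =ᵐ[P] fun ω ↦ {ω | X ω = b}.indicator (fun _ ↦ b - a) ω + a := by
    filter_upwards [h] with ω hω
    rcases hω with ha | hb
    · simp [ha, hab]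
    · simp [hb]
  have integral_eq : ∫ ω, X ω ∂P = P.real {ω | X ω = b} * (b - a) + a := by
    rw [integral_congr_ae ae_eq_indicator,
      integral_add ((integrable_const _).indicator₀ event) (integrable_const a),
      integral_indicator₀ event]
    simp
  rw [integral_eq, add_sub_cancel_right, mul_div_cancel_right₀ _ (sub_ne_zero.2 hab.symm)]

lemma measure_eq_half_of_integral_eq_midpoint {a b : ℝ} (hX : AEMeasurable X P) (hab : a ≠ b)
    (h : ∀ᵐ ω ∂P, X ω = a ∨ X ω = b) (hmean : ∫ ω, X ω ∂P = (a + b) / 2) :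
    P {ω | X ω = b} = 1 / 2 := by
  have real_eq_half : P.real {ω | X ω = b} = 1 / 2 := by
    rw [measureReal_eq_div_of_ae_eq_or_eq hX hab h, hmean, div_eq_iff (sub_ne_zero.2 hab.symm)]
    ring
  rw [← ENNReal.toReal_eq_toReal_iff' (measure_ne_top P _) (by simp), ← measureReal_def,
    real_eq_half]
  simp

end TwoPoint

/-- A real random variable with finite fourth moment whose fourth central moment equals
the square of its variance (kurtosis 1) is supported on two points `μ ± c` symmetric about
its mean; if it is not a.s. constant then `c > 0` and the two points have probability 1/2. -/
theorem stmt_8 {Ω : Type*} [MeasurableSpace Ω] (P : Measure Ω) [IsProbabilityMeasure P]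
    (X : Ω → ℝ) (hX : Measurable X) (hL4 : MemLp X 4 P)
    (μ : ℝ) (hμ : μ = ∫ ω, X ω ∂P)
    (h : (∫ ω, (X ω - μ) ^ 4 ∂P) = (∫ ω, (X ω - μ) ^ 2 ∂P) ^ 2) :
    ∃ c : ℝ, 0 ≤ c ∧ (∀ᵐ ω ∂P, X ω = μ - c ∨ X ω = μ + c) ∧
      ((¬ ∃ k : ℝ, ∀ᵐ ω ∂P, X ω = k) →
        0 < c ∧ P {ω | X ω = μ - c} = 1/2 ∧ P {ω | X ω = μ + c} = 1/2) := by
  have two_valued := ae_eq_sub_sqrt_or_eq_add_sqrt_of_integral_pow_four_eq hL4 h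
  set c := √(∫ ω, (X ω - μ) ^ 2 ∂P)
  refine ⟨c, Real.sqrt_nonneg _, two_valued, fun not_const ↦ ?_⟩
  have c_ne_zero : c ≠ 0 := fun hc ↦
    not_const ⟨μ, by simpa only [hc, sub_zero, add_zero, or_self] using two_valued⟩
  have c_pos : 0 < c := (Real.sqrt_nonneg _).lt_of_ne' c_ne_zero
  have values_lt : μ - c < μ + c := by linarith
  refine ⟨c_pos, ?_, ?_⟩
  · exact measure_eq_half_of_integral_eq_midpoint hX.aemeasurable values_lt.ne'
      (two_valued.mono fun _ ↦ Or.symm) (by linarith)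
  · exact measure_eq_half_of_integral_eq_midpoint hX.aemeasurable values_lt.ne
      two_valued (by linarith)
end

section
/- Let π be a probability density on [0,1] (π ≥ 0 measurable with ∫₀¹ π = 1), and let ρ_T(x,y) = min(|x−y|, 1−|x−y|). Suppose there is a constant C such that ∫₀¹ ρ_T(x,y)² π(y) dy = C for Lebesgue-almost every x ∈ [0,1]. Then π(x) = 1 for almost every x ∈ [0,1], i.e. π is the uniform density. -/
open MeasureTheory

/-!
If `s` is the antipode of `x` on the torus, then `ρ_T(x, y)² = (1/2 - |s - y|)²` on all of
`[0, 1]`, so constancy of the convolution says that the potential `s ↦ ∫ |s - y| π(y) dy` is a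
quadratic polynomial in `s` with leading coefficient `∫ π`. Since `|·| / 2` is the fundamental
solution of `d²/ds²`, the second derivative of the potential is `2 π`, whence `π = ∫ π`.
-/

open Set

section Potential

variable {E : Type*} [NormedAddCommGroup E] [NormedSpace ℝ E] {f : ℝ → E}

theorem hasDerivAt_integral_abs_sub_smul {μ : Measure ℝ} [NullSingletonClass μ] {s : ℝ}
    (hf : Integrable f μ) (hs : Integrable (fun y ↦ |s - y| • f y) μ) :
    HasDerivAt (fun t ↦ ∫ y, |t - y| • f y ∂μ)
      (∫ y, (SignType.sign (s - y) : ℝ) • f y ∂μ) s := by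
  have sign_measurable : Measurable fun y : ℝ ↦ (SignType.sign (s - y) : ℝ) := by
    simp only [sign_apply, sub_pos, sub_neg, apply_ite (SignType.cast : SignType → ℝ)]
    exact .ite measurableSet_Iio measurable_const (.ite measurableSet_Ioi measurable_const
      measurable_const)
  have lipschitz (y : ℝ) : LipschitzOnWith (Real.nnabs ‖f y‖) (fun t ↦ |t - y| • f y) univ := by
    refine LipschitzOnWith.of_dist_le_mul fun t _ u _ ↦ ?_
    rw [dist_eq_norm, ← sub_smul, norm_smul, mul_comm, Real.coe_nnabs, abs_norm, Real.dist_eq]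
    gcongr
    simpa using abs_abs_sub_abs_le (t - y) (u - y)
  refine (hasDerivAt_integral_of_dominated_loc_of_lip Filter.univ_mem ?_ hs
    (sign_measurable.aestronglyMeasurable.smul hf.1) (.of_forall lipschitz) hf.norm ?_).2
  · exact .of_forall fun t ↦ (Continuous.aestronglyMeasurable (by fun_prop)).smul hf.1
  · filter_upwards [Measure.ae_ne μ s] with y hy
    exact ((hasDerivAt_abs (sub_ne_zero.2 hy.symm)).comp_sub_const s y).smul_const (f y)

theorem integral_sign_sub_smul {μ : Measure ℝ} [NullSingletonClass μ] (hf : Integrable f μ)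
    (s : ℝ) :
    ∫ y, (SignType.sign (s - y) : ℝ) • f y ∂μ =
      (2 : ℝ) • (∫ y in Iic s, f y ∂μ) - ∫ y, f y ∂μ := by
  have sign_eq : (fun y ↦ (SignType.sign (s - y) : ℝ) • f y) =ᵐ[μ]
      fun y ↦ (2 : ℝ) • (Iic s).indicator f y - f y := by
    filter_upwards [Measure.ae_ne μ s] with y hy
    rcases hy.lt_or_gt with hlt | hgt
    · simp [sign_pos (sub_pos.2 hlt), indicator_of_mem (mem_Iic.2 hlt.le), two_smul]
    · simp [sign_neg (sub_neg.2 hgt), indicator_of_notMem (notMem_Iic.2 hgt)]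
  rw [integral_congr_ae sign_eq,
    integral_sub ((hf.indicator measurableSet_Iic).fun_smul (2 : ℝ)) hf, integral_smul,
    integral_indicator measurableSet_Iic]

variable [CompleteSpace E] {S : Set ℝ}

theorem ae_hasDerivAt_integral_Iic (hf : Integrable f) :
    ∀ᵐ s, HasDerivAt (fun t ↦ ∫ y in Iic t, f y) (f s) s := by
  filter_upwards [LocallyIntegrable.ae_hasDerivAt_integral hf.locallyIntegrable] with s hs
  have integral_Iic_eq (t : ℝ) :
      ∫ y in Iic t, f y = (∫ y in (0 : ℝ)..t, f y) + ∫ y in Iic 0, f y := by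
    rw [← intervalIntegral.integral_Iic_sub_Iic hf.integrableOn hf.integrableOn, sub_add_cancel]
  rw [funext integral_Iic_eq]
  exact (hs 0).add_const _

theorem ae_hasDerivAt_setIntegral_sign_sub_smul (hS : MeasurableSet S) (hf : IntegrableOn f S) :
    ∀ᵐ s ∂volume.restrict S,
      HasDerivAt (fun t ↦ ∫ y in S, (SignType.sign (t - y) : ℝ) • f y) ((2 : ℝ) • f s) s := by
  rw [ae_restrict_iff' hS]
  filter_upwards [ae_hasDerivAt_integral_Iic (hf.integrable_indicator hS)] with s deriv_Iic hs
  rw [indicator_of_mem hs] at deriv_Iic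
  simp_rw [integral_sign_sub_smul hf, Measure.restrict_restrict measurableSet_Iic]
  simp_rw [setIntegral_indicator hS] at deriv_Iic
  exact (deriv_Iic.const_smul (2 : ℝ)).sub_const _

theorem ae_two_smul_eq_of_eqOn_setIntegral_abs_sub_smul {V : Set ℝ} {Q Q' Q'' : ℝ → E}
    (hS : MeasurableSet S) (hf : IntegrableOn f S)
    (hfS : ∀ s ∈ V, IntegrableOn (fun y ↦ |s - y| • f y) S)
    (hV : IsOpen V) (hVS : V ⊆ S) (hQ : ∀ s ∈ V, HasDerivAt Q (Q' s) s)
    (hQ' : ∀ s ∈ V, HasDerivAt Q' (Q'' s) s)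
    (h : EqOn (fun s ↦ ∫ y in S, |s - y| • f y) Q V) :
    ∀ᵐ s ∂volume.restrict V, (2 : ℝ) • f s = Q'' s := by
  have deriv_eq : EqOn (fun s ↦ ∫ y in S, (SignType.sign (s - y) : ℝ) • f y) Q' V :=
    fun s hs ↦ (hasDerivAt_integral_abs_sub_smul hf (hfS s hs)).unique
      ((hQ s hs).congr_of_eventuallyEq (h.eventuallyEq_of_mem (hV.mem_nhds hs)))
  filter_upwards [ae_restrict_mem hV.measurableSet,
    ae_restrict_of_ae_restrict_of_subset hVS (ae_hasDerivAt_setIntegral_sign_sub_smul hS hf)]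
    with s hs deriv_sign
  exact deriv_sign.unique
    ((hQ' s hs).congr_of_eventuallyEq (deriv_eq.eventuallyEq_of_mem (hV.mem_nhds hs)))

end Potential

section Kernel

variable {E : Type*} [NormedAddCommGroup E] [NormedSpace ℝ E]

theorem continuousOn_setIntegral_smul_of_isCompact {X Y : Type*} [TopologicalSpace X]
    [FirstCountableTopology X] [TopologicalSpace Y] [T2Space Y] [MeasurableSpace Y]
    [OpensMeasurableSpace Y] {μ : Measure Y} {k : X → Y → ℝ} {f : Y → E} {A : Set X} {B : Set Y}
    (hA : IsCompact A) (hB : IsCompact B) (hk : ContinuousOn (Function.uncurry k) (A ×ˢ B))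
    (hf : IntegrableOn f B μ) :
    ContinuousOn (fun x ↦ ∫ y in B, k x y • f y ∂μ) A := by
  obtain ⟨M, hM⟩ := (hA.prod hB).exists_bound_of_continuousOn hk
  refine continuousOn_of_dominated (bound := fun y ↦ M * ‖f y‖) (fun x hx ↦ ?_) (fun x hx ↦ ?_)
    (hf.norm.const_mul M) ?_
  · exact ((hk.uncurry_left x hx).aestronglyMeasurable hB.measurableSet).smul hf.1
  · filter_upwards [ae_restrict_mem hB.measurableSet] with y hy
    rw [norm_smul]
    gcongr
    exact hM (x, y) ⟨hx, hy⟩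
  · filter_upwards [ae_restrict_mem hB.measurableSet] with y hy
    exact (hk.uncurry_right y hy).smul continuousOn_const

theorem integral_sub_sq_smul {μ : Measure ℝ} {f : ℝ → E} (hf : Integrable f μ)
    (hf₁ : Integrable (fun y ↦ y • f y) μ) (hf₂ : Integrable (fun y ↦ y ^ 2 • f y) μ) (s : ℝ) :
    ∫ y, (s - y) ^ 2 • f y ∂μ =
      s ^ 2 • (∫ y, f y ∂μ) + s • (-2 : ℝ) • (∫ y, y • f y ∂μ) + ∫ y, y ^ 2 • f y ∂μ := by
  have expand (y : ℝ) :
      (s - y) ^ 2 • f y = s ^ 2 • f y + s • (-2 : ℝ) • y • f y + y ^ 2 • f y := by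
    module
  simp_rw [expand]
  have hf₁' := (hf₁.fun_smul (-2 : ℝ)).fun_smul s
  rw [integral_add ((hf.fun_smul (s ^ 2)).fun_add hf₁') hf₂,
    integral_add (hf.fun_smul (s ^ 2)) hf₁', integral_smul, integral_smul, integral_smul]

end Kernel

theorem hasDerivAt_sq_smul_add_smul_add {E : Type*} [NormedAddCommGroup E] [NormedSpace ℝ E]
    (a b c : E) (s : ℝ) :
    HasDerivAt (fun t : ℝ ↦ t ^ 2 • a + t • b + c) ((2 * s) • a + b) s := by
  simpa using ((((hasDerivAt_id s).pow 2).smul_const a).add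
    ((hasDerivAt_id s).smul_const b)).add_const c

section Torus

theorem continuous_uncurry_rhoT : Continuous (Function.uncurry rhoT) := by
  unfold rhoT Function.uncurry
  fun_prop

theorem exists_forall_rhoT_sq_eq_half_sub_abs_sq {s : ℝ} (hs : s ∈ Icc (0 : ℝ) 1) :
    ∃ x ∈ Icc (0 : ℝ) 1, ∀ y ∈ Icc (0 : ℝ) 1, rhoT x y ^ 2 = (1 / 2 - |s - y|) ^ 2 := by
  rcases le_total s (1 / 2) with h | h
  · refine ⟨s + 1 / 2, ⟨by linarith [hs.1], by linarith⟩, fun y hy ↦ ?_⟩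
    rw [sq_eq_sq_iff_eq_or_eq_neg]
    grind [rhoT]
  · refine ⟨s - 1 / 2, ⟨by linarith, by linarith [hs.2]⟩, fun y hy ↦ ?_⟩
    rw [sq_eq_sq_iff_eq_or_eq_neg]
    grind [rhoT]

variable {E : Type*} [NormedAddCommGroup E] [NormedSpace ℝ E] {f : ℝ → E} {C : E}

theorem setIntegral_rhoT_sq_smul_eq_of_ae (hf : IntegrableOn f (Icc 0 1))
    (hC : ∀ᵐ x ∂volume.restrict (Icc (0 : ℝ) 1), ∫ y in Icc (0 : ℝ) 1, rhoT x y ^ 2 • f y = C) :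
    ∀ x ∈ Icc (0 : ℝ) 1, ∫ y in Icc (0 : ℝ) 1, rhoT x y ^ 2 • f y = C :=
  Measure.eqOn_Icc_of_ae_eq volume zero_ne_one hC
    (continuousOn_setIntegral_smul_of_isCompact isCompact_Icc isCompact_Icc
      (continuous_uncurry_rhoT.pow 2).continuousOn hf)
    continuousOn_const

theorem setIntegral_abs_sub_smul_eq_of_rhoT_sq (hf : IntegrableOn f (Icc 0 1))
    (hC : ∀ x ∈ Icc (0 : ℝ) 1, ∫ y in Icc (0 : ℝ) 1, rhoT x y ^ 2 • f y = C)
    {s : ℝ} (hs : s ∈ Icc (0 : ℝ) 1) :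
    ∫ y in Icc (0 : ℝ) 1, |s - y| • f y =
      (∫ y in Icc (0 : ℝ) 1, (s - y) ^ 2 • f y) +
        (1 / 4 : ℝ) • (∫ y in Icc (0 : ℝ) 1, f y) - C := by
  obtain ⟨x, hx, rhoT_sq_eq⟩ := exists_forall_rhoT_sq_eq_half_sub_abs_sq hs
  have abs_sub_smul_eq : EqOn (fun y ↦ |s - y| • f y)
      (fun y ↦ (s - y) ^ 2 • f y + (1 / 4 : ℝ) • f y - rhoT x y ^ 2 • f y) (Icc 0 1) := by
    intro y hy
    simp only [rhoT_sq_eq y hy, ← sq_abs (s - y)]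
    module
  have integrable_sq : IntegrableOn (fun y ↦ (s - y) ^ 2 • f y) (Icc 0 1) :=
    hf.continuousOn_smul (by fun_prop) isCompact_Icc
  have integrable_rhoT : IntegrableOn (fun y ↦ rhoT x y ^ 2 • f y) (Icc 0 1) :=
    hf.continuousOn_smul
      ((continuous_uncurry_rhoT.comp (.prodMk_right x)).pow 2).continuousOn isCompact_Icc
  have integrable_quarter := hf.integrable.fun_smul (1 / 4 : ℝ)
  rw [setIntegral_congr_fun measurableSet_Icc abs_sub_smul_eq,
    integral_sub (integrable_sq.fun_add integrable_quarter) integrable_rhoT,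
    integral_add integrable_sq integrable_quarter, integral_smul, hC x hx]

end Torus

theorem stmt_9_general {E : Type*} [NormedAddCommGroup E] [NormedSpace ℝ E] [CompleteSpace E]
    {f : ℝ → E} {C : E} (hf : IntegrableOn f (Icc 0 1))
    (hC : ∀ᵐ x ∂volume.restrict (Icc (0 : ℝ) 1), ∫ y in Icc (0 : ℝ) 1, rhoT x y ^ 2 • f y = C) :
    ∀ᵐ x ∂volume.restrict (Icc (0 : ℝ) 1), f x = ∫ y in Icc (0 : ℝ) 1, f y := by
  set m₀ := ∫ y in Icc (0 : ℝ) 1, f y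
  set m₁ := ∫ y in Icc (0 : ℝ) 1, y • f y
  set m₂ := ∫ y in Icc (0 : ℝ) 1, y ^ 2 • f y
  have potential_eq : EqOn (fun s ↦ ∫ y in Icc (0 : ℝ) 1, |s - y| • f y)
      (fun s ↦ s ^ 2 • m₀ + s • (-2 : ℝ) • m₁ + (m₂ + (1 / 4 : ℝ) • m₀ - C)) (Ioo 0 1) := by
    intro s hs
    simp only [setIntegral_abs_sub_smul_eq_of_rhoT_sq hf
      (setIntegral_rhoT_sq_smul_eq_of_ae hf hC) (Ioo_subset_Icc_self hs)]
    rw [integral_sub_sq_smul hf (hf.continuousOn_smul continuousOn_id isCompact_Icc)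
      (hf.continuousOn_smul (continuousOn_pow 2) isCompact_Icc)]
    module
  have two_smul_eq : ∀ᵐ s ∂volume.restrict (Ioo (0 : ℝ) 1), (2 : ℝ) • f s = (2 : ℝ) • m₀ := by
    refine ae_two_smul_eq_of_eqOn_setIntegral_abs_sub_smul measurableSet_Icc hf
      (fun s _ ↦ hf.continuousOn_smul (by fun_prop) isCompact_Icc) isOpen_Ioo Ioo_subset_Icc_self
      (fun s _ ↦ hasDerivAt_sq_smul_add_smul_add m₀ _ _ s) (fun s _ ↦ ?_) potential_eq
    simpa using (((hasDerivAt_id s).const_mul 2).smul_const m₀).add_const ((-2 : ℝ) • m₁)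
  rw [← restrict_Ioo_eq_restrict_Icc]
  filter_upwards [two_smul_eq] with s hs
  exact smul_right_injective E two_ne_zero hs

/-- If `π` is a probability density on `[0,1]` such that the torus convolution
`x ↦ ∫₀¹ ρ_T(x,y)² π(y) dy` is a.e. constant, then `π` is the uniform density. -/
theorem stmt_9 (π : ℝ → ℝ) (hmeas : Measurable π)
    (hnonneg : ∀ x ∈ Set.Icc (0:ℝ) 1, 0 ≤ π x)
    (hone : ∫ x in Set.Icc (0:ℝ) 1, π x = 1)
    (C : ℝ)
    (hC : ∀ᵐ x ∂(volume.restrict (Set.Icc (0:ℝ) 1)),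
      (∫ y in Set.Icc (0:ℝ) 1, rhoT x y ^ 2 * π y) = C) :
    ∀ᵐ x ∂(volume.restrict (Set.Icc (0:ℝ) 1)), π x = 1 := by
  have hint : IntegrableOn π (Icc 0 1) := not_imp_comm.1 integral_undef (by simp [hone])
  simpa only [hone] using stmt_9_general hint hC
end

section
/- For every nonzero integer ξ, ∫₀¹ min(x, 1−x)² e^{−2πiξx} dx = (−1)^ξ / (2π²ξ²), and ∫₀¹ min(x, 1−x)² dx = 1/12. -/
open MeasureTheory Complex

/-!
On a circle of length `T` the function `min x (T - x)` is the distance to the origin, so a period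
of an integrand built from it may be moved from `[0, T]` to `[-T/2, T/2]`, where the squared
distance is simply `x ^ 2`. Integrating `x ^ 2 * exp (c * x)` by parts over this symmetric interval,
where `exp (c * x)` takes equal values at the two ends, only the boundary term linear in `x`
survives.
-/

section Folding

variable {T : ℝ}

lemma norm_coe_addCircle_eq_min_s10 (hT : 0 < T) {x : ℝ} (hx : x ∈ Set.Icc 0 T) :
    ‖(x : AddCircle T)‖ = min x (T - x) := by
  rcases le_total x (T / 2) with h_left | h_right
  · rw [min_eq_left (by linarith), (AddCircle.norm_coe_eq_abs_iff T hT.ne').2, abs_of_nonneg hx.1]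
    rwa [abs_of_nonneg hx.1, abs_of_pos hT]
  · have abs_sub_period : |x - T| = T - x := by rw [abs_of_nonpos (by linarith [hx.2]), neg_sub]
    have coe_sub_period : ((x - T : ℝ) : AddCircle T) = x := by simp
    rw [min_eq_right (by linarith), ← coe_sub_period,
      (AddCircle.norm_coe_eq_abs_iff T hT.ne').2, abs_sub_period]
    rw [abs_sub_period, abs_of_pos hT]
    linarith

lemma integral_comp_min_eq_integral_comp_abs {E : Type*} [NormedAddCommGroup E] [NormedSpace ℝ E]
    (hT : 0 < T) {F : ℝ → ℝ → E} (hF : ∀ r, Function.Periodic (F r) T) :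
    ∫ x in 0..T, F (min x (T - x)) x = ∫ x in -(T / 2)..T / 2, F |x| x := by
  have periodic_norm : Function.Periodic (fun x : ℝ ↦ F ‖(x : AddCircle T)‖ x) T := fun x ↦ by
    simp only [AddCircle.coe_add_period, hF _ x]
  calc ∫ x in 0..T, F (min x (T - x)) x
      = ∫ x in 0..0 + T, F ‖(x : AddCircle T)‖ x := by
        rw [zero_add]
        refine intervalIntegral.integral_congr fun x hx ↦ ?_
        rw [Set.uIcc_of_le hT.le] at hx
        simp only [norm_coe_addCircle_eq_min_s10 hT hx]
    _ = ∫ x in -(T / 2)..-(T / 2) + T, F ‖(x : AddCircle T)‖ x :=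
        periodic_norm.intervalIntegral_add_eq 0 (-(T / 2))
    _ = ∫ x in -(T / 2)..T / 2, F |x| x := by
        rw [show -(T / 2) + T = T / 2 by ring]
        refine intervalIntegral.integral_congr fun x hx ↦ ?_
        rw [Set.uIcc_of_le (by linarith)] at hx
        have abs_le_half : |x| ≤ |T| / 2 := by rw [abs_of_pos hT]; exact abs_le.2 hx
        simp only [(AddCircle.norm_coe_eq_abs_iff T hT.ne').2 abs_le_half]

end Folding

section Exponential

variable {c : ℂ}

lemma hasDerivAt_sq_mul_cexp_primitive (hc : c ≠ 0) (x : ℝ) :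
    HasDerivAt (fun x : ℝ ↦ ((x : ℂ) ^ 2 / c - 2 * x / c ^ 2 + 2 / c ^ 3) * exp (c * x))
      ((x : ℂ) ^ 2 * exp (c * x)) x := by
  have deriv_coe : HasDerivAt (fun x : ℝ ↦ (x : ℂ)) 1 x := ofRealCLM.hasDerivAt
  have deriv_poly := (((deriv_coe.fun_pow 2).div_const c).fun_sub
    ((deriv_coe.const_mul 2).div_const (c ^ 2))).add_const (2 / c ^ 3)
  refine (deriv_poly.fun_mul (deriv_coe.const_mul c).cexp).congr_deriv ?_
  push_cast
  field_simp
  ring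

lemma integral_sq_mul_cexp (hc : c ≠ 0) (a b : ℝ) :
    ∫ x in a..b, (x : ℂ) ^ 2 * exp (c * x) =
      ((b : ℂ) ^ 2 / c - 2 * b / c ^ 2 + 2 / c ^ 3) * exp (c * b) -
        ((a : ℂ) ^ 2 / c - 2 * a / c ^ 2 + 2 / c ^ 3) * exp (c * a) :=
  intervalIntegral.integral_eq_sub_of_hasDerivAt
    (fun x _ ↦ hasDerivAt_sq_mul_cexp_primitive hc x)
    (Continuous.intervalIntegrable (by fun_prop) a b)

lemma integral_symm_sq_mul_cexp (hc : c ≠ 0) {T : ℝ} (hcT : exp (c * T) = 1) :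
    ∫ x in -(T / 2)..T / 2, (x : ℂ) ^ 2 * exp (c * x) = -2 * T * exp (c * (T / 2)) / c ^ 2 := by
  have exp_ends_eq : exp (c * -(T / 2)) = exp (c * (T / 2)) := by
    rw [show c * (T / 2) = c * -(T / 2) + c * T by ring, exp_add, hcT, mul_one]
  rw [integral_sq_mul_cexp hc]
  push_cast
  rw [exp_ends_eq]
  ring

end Exponential

section SquaredDistance

variable {T : ℝ}

lemma integral_min_sq (hT : 0 < T) : ∫ x in 0..T, min x (T - x) ^ 2 = T ^ 3 / 12 := by
  rw [integral_comp_min_eq_integral_comp_abs hT (F := fun r _ ↦ r ^ 2) fun _ _ ↦ rfl]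
  simp only [sq_abs, integral_pow]
  ring

lemma integral_min_sq_mul_cexp (hT : 0 < T) {c : ℂ} (hc : c ≠ 0) (hcT : exp (c * T) = 1) :
    ∫ x in 0..T, ((min x (T - x) : ℝ) : ℂ) ^ 2 * exp (c * x) =
      -2 * T * exp (c * (T / 2)) / c ^ 2 := by
  have periodic_exp (r : ℝ) : Function.Periodic (fun x : ℝ ↦ (r : ℂ) ^ 2 * exp (c * x)) T :=
    fun x ↦ by simp only [ofReal_add, mul_add, exp_add, hcT, mul_one]
  rw [integral_comp_min_eq_integral_comp_abs hT periodic_exp]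
  simp only [← ofReal_pow, sq_abs]
  simpa only [ofReal_pow] using integral_symm_sq_mul_cexp hc hcT

end SquaredDistance

lemma cexp_neg_int_mul_pi_mul_I (n : ℤ) : exp (-n * (Real.pi * I)) = (-1) ^ n := by
  rw [neg_mul_comm, exp_int_mul, exp_neg_pi_mul_I]

/-- The Fourier modes on the torus of the squared torus distance to the origin,
`x ↦ min(x, 1−x)²` on `[0,1]`: the `ξ`-th mode is `(−1)^ξ/(2π²ξ²)` for `ξ ≠ 0`,
and the zeroth mode is `1/12`. -/
theorem stmt_10 :
    (∀ ξ : ℤ, ξ ≠ 0 →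
      (∫ x in (0:ℝ)..1,
          ((min x (1 - x) : ℝ) ^ 2 : ℂ) *
            Complex.exp (-2 * (Real.pi : ℂ) * Complex.I * (ξ : ℂ) * (x : ℂ)))
        = ((-1 : ℂ) ^ ξ) / (2 * (Real.pi : ℂ) ^ 2 * (ξ : ℂ) ^ 2)) ∧
    (∫ x in (0:ℝ)..1, (min x (1 - x)) ^ 2 = (1:ℝ)/12) := by
  refine ⟨fun ξ hξ ↦ ?_, by simpa only [one_pow] using integral_min_sq one_pos⟩
  set c : ℂ := -2 * Real.pi * I * ξ with hc_def
  have hc : c ≠ 0 := by simp [hc_def, hξ, Real.pi_ne_zero]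
  have exp_period : exp (c * (1 : ℝ)) = 1 := by
    rw [← exp_int_mul_two_pi_mul_I (-ξ), hc_def]
    push_cast
    ring_nf
  have exp_half_period : exp (c * ((1 : ℝ) / 2)) = (-1) ^ ξ := by
    rw [← cexp_neg_int_mul_pi_mul_I, hc_def]
    push_cast
    ring_nf
  have c_sq : c ^ 2 = -(4 * Real.pi ^ 2 * ξ ^ 2) := by
    linear_combination 4 * (Real.pi : ℂ) ^ 2 * ξ ^ 2 * I_sq
  rw [integral_min_sq_mul_cexp one_pos hc exp_period, exp_half_period, c_sq, ofReal_one]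
  field_simp
  norm_num
end

section
/- Let π be a probability density on [0,1], let X, Y, Z be i.i.d. random variables with density π, let ρ_T(x,y) = min(|x−y|, 1−|x−y|), and let μ_T = E[ρ_T(X,Y)²]. Then E[(ρ_T(X,Y)² − μ_T)(ρ_T(X,Z)² − μ_T)] = Var(E[ρ_T(X,Y)² | X]) ≥ 0, and this quantity equals 0 if and only if π(x) = 1 for almost every x ∈ [0,1]. Consequently, adjacent squared torus distances of i.i.d. points with density π are uncorrelated if and only if π is uniform. -/
open MeasureTheory

/-!
Integrating out `Y` and `Z` first turns the covariance into `∫ (g - μ_T)² π`, where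
`g x = E[ρ_T(x, Y)²]`. It therefore vanishes iff `g = μ_T` almost everywhere on `{π ≠ 0}`.

Extend `π` to a `1`-periodic function `p`, so that `g x = ∫ y in x - 1/2..x + 1/2, (x - y)² p y`.
Expanding the square and differentiating each moment by Lebesgue's theorem gives, almost everywhere,
`g' x = 2 (x - ∫ y in x - 1/2..x + 1/2, y p y)` and `g'' x = 2 (1 - p (x + 1/2))`. A function has
zero derivative at almost every point of a level set, so `g'` and then `g''` vanish almost
everywhere on `{g = μ_T}`: if `p x ≠ 0` then `p (x + 1/2) = 1`. Applying this again at the antipode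
`x + 1/2`, where `p` is now nonzero, gives `p x = 1`. Thus `π` takes only the values `0` and `1`,
and `∫ π = 1` forces `π = 1`. Conversely, for uniform `π` the function `g` is constant.
-/

open Set Filter Topology Function

section LevelSets

lemma ae_uniqueDiffWithinAt (μ : Measure ℝ) [NullSingletonClass μ] (s : Set ℝ) :
    ∀ᵐ x ∂μ, x ∈ s → UniqueDiffWithinAt ℝ s x := by
  filter_upwards [(countable_setOfPred_isolated_right_within (s := s)).ae_notMem μ]
    with x hx hxs
  have hright : (𝓝[s ∩ Ioi x] x).NeBot := neBot_iff.2 fun h => hx ⟨hxs, h⟩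
  rw [uniqueDiffWithinAt_iff_accPt, accPt_principal_iff_nhdsWithin]
  exact hright.mono (nhdsWithin_mono _ fun y hy => ⟨hy.1, hy.2.ne'⟩)

lemma ae_hasDerivAt_eq_zero_of_eq_const {E : Type*} [NormedAddCommGroup E] [NormedSpace ℝ E]
    {μ : Measure ℝ} [NullSingletonClass μ] {f f' : ℝ → E}
    (hf : ∀ᵐ x ∂μ, HasDerivAt f (f' x) x) (c : E) :
    ∀ᵐ x ∂μ, f x = c → f' x = 0 := by
  filter_upwards [hf, ae_uniqueDiffWithinAt μ {x | f x = c}] with x hx hunique hxc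
  have hconst : HasDerivWithinAt f 0 {x | f x = c} x :=
    (hasDerivWithinAt_const x _ c).congr (fun _ hy => hy) hxc
  exact (hunique hxc).eq_deriv _ hx.hasDerivWithinAt hconst

end LevelSets

section MovingWindow

lemma locallyIntegrable_of_intervalIntegrable {E : Type*} [NormedAddCommGroup E] {f : ℝ → E}
    (hf : ∀ a b, IntervalIntegrable f volume a b) : LocallyIntegrable f := fun x =>
  ⟨Icc (x - 1) (x + 1), Icc_mem_nhds (by linarith) (by linarith),
    (intervalIntegrable_iff_integrableOn_Icc_of_le (by linarith)).1 (hf _ _)⟩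

lemma ae_comp_add_right {G : Type*} [AddGroup G] [MeasurableSpace G] [MeasurableAdd G]
    {μ : Measure G} [μ.IsAddRightInvariant] {P : G → Prop} (hP : ∀ᵐ x ∂μ, P x) (a : G) :
    ∀ᵐ x ∂μ, P (x + a) :=
  (measurePreserving_add_right μ a).quasiMeasurePreserving.ae hP

lemma ae_hasDerivAt_integral_window {E : Type*} [NormedAddCommGroup E] [NormedSpace ℝ E]
    [CompleteSpace E] {f : ℝ → E} (hf : ∀ a b, IntervalIntegrable f volume a b) (a b : ℝ) :
    ∀ᵐ x, HasDerivAt (fun x => ∫ y in (x + a)..(x + b), f y) (f (x + b) - f (x + a)) x := by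
  have hprim :=
    LocallyIntegrable.ae_hasDerivAt_integral (locallyIntegrable_of_intervalIntegrable hf)
  filter_upwards [ae_comp_add_right hprim a, ae_comp_add_right hprim b] with x ha hb
  have hsplit : (fun x => ∫ y in (x + a)..(x + b), f y)
      = fun x => (∫ y in (0 : ℝ)..(x + b), f y) - ∫ y in (0 : ℝ)..(x + a), f y :=
    funext fun x => (intervalIntegral.integral_interval_sub_left (hf _ _) (hf _ _)).symm
  rw [hsplit]
  exact ((hb 0).comp_add_const x b).sub ((ha 0).comp_add_const x a)

end MovingWindow

section Circle

/-- The mean squared distance from `x` to a point of density `p` on the circle of circumference `T`,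
with `p` read on `[0, T]`. -/
noncomputable def circleMeanSq (T : ℝ) (p : ℝ → ℝ) (x : ℝ) : ℝ :=
  ∫ y in (0 : ℝ)..T, ‖((x - y : ℝ) : AddCircle T)‖ ^ 2 * p y

lemma periodic_circleMeanSq (T : ℝ) (p : ℝ → ℝ) : Periodic (circleMeanSq T p) T := fun x => by
  simp [circleMeanSq]

variable {T : ℝ} {p : ℝ → ℝ}

lemma continuous_circleMeanSq (hT : T ≠ 0) (hint : IntervalIntegrable p volume 0 T) :
    Continuous (circleMeanSq T p) := by
  have hdist (y : ℝ) : Continuous fun x : ℝ => ‖((x - y : ℝ) : AddCircle T)‖ ^ 2 :=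
    ((AddCircle.continuous_mk' T).comp (continuous_sub_right y)).norm.pow 2
  refine intervalIntegral.continuous_of_dominated_interval
    (bound := fun y => (|T| / 2) ^ 2 * ‖p y‖) (fun x => ?_) (fun x => .of_forall fun y _ => ?_)
    (hint.norm.const_mul _) (.of_forall fun y _ => (hdist y).mul_const _)
  · have hdist' : Continuous fun y : ℝ => ‖((x - y : ℝ) : AddCircle T)‖ ^ 2 :=
      ((AddCircle.continuous_mk' T).comp (continuous_sub_left x)).norm.pow 2
    exact hdist'.aestronglyMeasurable.mul (intervalIntegrable_iff.1 hint).aestronglyMeasurable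
  · rw [norm_mul, norm_pow, norm_norm]
    gcongr
    exact AddCircle.norm_le_half_period T hT

lemma circleMeanSq_eq_integral_window (hT : 0 < T) (hp : Periodic p T) (x : ℝ) :
    circleMeanSq T p x = ∫ y in (x - T / 2)..(x + T / 2), (x - y) ^ 2 * p y := by
  have hper : Periodic (fun y => ‖((x - y : ℝ) : AddCircle T)‖ ^ 2 * p y) T := fun y => by
    simp [hp y]
  have hshift := hper.intervalIntegral_add_eq 0 (x - T / 2)
  rw [zero_add, show x - T / 2 + T = x + T / 2 by ring] at hshift
  rw [circleMeanSq, hshift]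
  refine intervalIntegral.integral_congr fun y hy => ?_
  rw [uIcc_of_le (by linarith)] at hy
  have hdist : |x - y| ≤ |T| / 2 := by
    rw [abs_of_pos hT, abs_le]
    constructor <;> linarith [hy.1, hy.2]
  simp only [(AddCircle.norm_coe_eq_abs_iff T hT.ne').2 hdist, sq_abs]

lemma circleMeanSq_one (hT : 0 < T) (x : ℝ) : circleMeanSq T (fun _ => 1) x = T ^ 3 / 12 := by
  rw [circleMeanSq_eq_integral_window hT (fun _ => rfl)]
  simp only [mul_one]
  rw [intervalIntegral.integral_comp_sub_left (fun y => y ^ 2) x, integral_pow]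
  ring

lemma ae_hasDerivAt_integral_period_mul (hp : Periodic p T)
    (hint : ∀ a b, IntervalIntegrable p volume a b) {f : ℝ → ℝ} (hf : Continuous f) :
    ∀ᵐ x, HasDerivAt (fun x => ∫ y in (x - T / 2)..(x + T / 2), f y * p y)
      ((f (x + T / 2) - f (x - T / 2)) * p (x + T / 2)) x := by
  filter_upwards [ae_hasDerivAt_integral_window
    (fun a b => (hint a b).continuousOn_mul hf.continuousOn) (-(T / 2)) (T / 2)] with x hx
  have hantipode : p (x - T / 2) = p (x + T / 2) := by
    rw [← hp]; congr 1; ring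
  simp only [← sub_eq_add_neg] at hx
  rwa [hantipode, ← sub_mul] at hx

lemma circleMeanSq_eq_moments (hT : 0 < T) (hp : Periodic p T)
    (hint : ∀ a b, IntervalIntegrable p volume a b) (x : ℝ) :
    circleMeanSq T p x = x ^ 2 * (∫ y in (0 : ℝ)..T, p y)
      - 2 * x * (∫ y in (x - T / 2)..(x + T / 2), y * p y)
      + ∫ y in (x - T / 2)..(x + T / 2), y ^ 2 * p y := by
  have hmul (f : ℝ → ℝ) (hf : Continuous f) :
      IntervalIntegrable (fun y => f y * p y) volume (x - T / 2) (x + T / 2) :=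
    (hint _ _).continuousOn_mul hf.continuousOn
  have hmass : ∫ y in (x - T / 2)..(x + T / 2), p y = ∫ y in (0 : ℝ)..T, p y := by
    have hshift := hp.intervalIntegral_add_eq (x - T / 2) 0
    rwa [zero_add, show x - T / 2 + T = x + T / 2 by ring] at hshift
  have hexpand (y : ℝ) :
      (x - y) ^ 2 * p y = x ^ 2 * p y - 2 * x * (y * p y) + y ^ 2 * p y := by ring
  simp only [circleMeanSq_eq_integral_window hT hp, hexpand]
  have hzeroth := (hint (x - T / 2) (x + T / 2)).const_mul (x ^ 2)
  have hfirst := (hmul (fun y => y) continuous_id).const_mul (2 * x)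
  have hsecond := hmul (fun y => y ^ 2) (continuous_pow 2)
  rw [intervalIntegral.integral_add (hzeroth.sub hfirst) hsecond,
    intervalIntegral.integral_sub hzeroth hfirst, intervalIntegral.integral_const_mul,
    intervalIntegral.integral_const_mul, hmass]

lemma ae_hasDerivAt_circleMeanSq (hT : 0 < T) (hp : Periodic p T)
    (hint : ∀ a b, IntervalIntegrable p volume a b) :
    ∀ᵐ x, HasDerivAt (circleMeanSq T p)
      (2 * (x * (∫ y in (0 : ℝ)..T, p y) - ∫ y in (x - T / 2)..(x + T / 2), y * p y)) x := by
  filter_upwards [ae_hasDerivAt_integral_period_mul hp hint continuous_id,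
    ae_hasDerivAt_integral_period_mul hp hint (continuous_pow 2)] with x hfirst hsecond
  rw [funext (circleMeanSq_eq_moments hT hp hint)]
  have hmoments := ((((hasDerivAt_id x).pow 2).mul_const (∫ y in (0 : ℝ)..T, p y)).sub
    (((hasDerivAt_id x).const_mul 2).mul hfirst)).add hsecond
  refine hmoments.congr_deriv ?_
  -- The boundary terms `∓ 2 * x * T * p (x + T / 2)` of the two moments cancel.
  simp only [id_eq]
  ring

lemma ae_mul_antipode_eq_of_circleMeanSq_eq (hT : 0 < T) (hp : Periodic p T)
    (hint : ∀ a b, IntervalIntegrable p volume a b) (c : ℝ) :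
    ∀ᵐ x, circleMeanSq T p x = c → T * p (x + T / 2) = ∫ y in (0 : ℝ)..T, p y := by
  have hsecondDeriv : ∀ᵐ x, HasDerivAt (fun x => 2 * (x * (∫ y in (0 : ℝ)..T, p y)
      - ∫ y in (x - T / 2)..(x + T / 2), y * p y))
      (2 * ((∫ y in (0 : ℝ)..T, p y) - T * p (x + T / 2))) x := by
    filter_upwards [ae_hasDerivAt_integral_period_mul hp hint continuous_id] with x hfirst
    refine ((((hasDerivAt_id x).mul_const _).sub hfirst).const_mul 2).congr_deriv ?_
    simp only [id_eq]
    ring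
  filter_upwards [
    ae_hasDerivAt_eq_zero_of_eq_const (ae_hasDerivAt_circleMeanSq hT hp hint) c,
    ae_hasDerivAt_eq_zero_of_eq_const hsecondDeriv 0] with x hderiv hderiv₂ hx
  linarith [hderiv₂ (hderiv hx)]

lemma ae_eq_zero_or_mul_eq_of_circleMeanSq_eq (hT : 0 < T) (hp : Periodic p T)
    (hint : ∀ a b, IntervalIntegrable p volume a b) (hmass : ∫ y in (0 : ℝ)..T, p y ≠ 0) {c : ℝ}
    (hc : ∀ᵐ x, p x ≠ 0 → circleMeanSq T p x = c) :
    ∀ᵐ x, p x = 0 ∨ T * p x = ∫ y in (0 : ℝ)..T, p y := by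
  have hantipode : ∀ᵐ x, p x ≠ 0 → T * p (x + T / 2) = ∫ y in (0 : ℝ)..T, p y := by
    filter_upwards [hc, ae_mul_antipode_eq_of_circleMeanSq_eq hT hp hint c] with x hx hx' hpx
    exact hx' (hx hpx)
  filter_upwards [hantipode, ae_comp_add_right hantipode (T / 2)] with x hx hx'
  rw [add_assoc, add_halves, hp] at hx'
  refine or_iff_not_imp_left.2 fun hpx => hx' fun hzero => hmass ?_
  rw [← hx hpx, hzero, mul_zero]

lemma ae_of_periodic_of_ae_restrict_Ioc {P : ℝ → Prop} (hT : 0 < T) (hP : Periodic P T) {t : ℝ}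
    (h : ∀ᵐ x ∂volume.restrict (Ioc t (t + T)), P x) : ∀ᵐ x, P x := by
  have : VAddInvariantMeasure (AddSubgroup.zmultiples T) ℝ volume :=
    ⟨fun c s _ => measure_preimage_add _ _ _⟩
  rw [ae_iff]
  refine (isAddFundamentalDomain_Ioc hT t).measure_zero_of_invariant _ (fun g => ?_) ?_
  · ext x
    simp only [mem_vadd_set_iff_neg_vadd_mem, mem_ofPred_eq, hP.map_vadd_zmultiples]
  · rwa [← Measure.restrict_apply₀' nullMeasurableSet_Ioc, ← ae_iff]

end Circle

section UnitTorus

lemma continuous_rhoT (x : ℝ) : Continuous (rhoT x) := by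
  unfold rhoT
  fun_prop

lemma rhoT_eq_norm {x y : ℝ} (hxy : |x - y| ≤ 1) :
    rhoT x y = ‖((x - y : ℝ) : UnitAddCircle)‖ := by
  have habs : ‖((x - y : ℝ) : UnitAddCircle)‖ = ‖((|x - y| : ℝ) : UnitAddCircle)‖ := by
    rcases abs_choice (x - y) with h | h <;> simp only [h, AddCircle.coe_neg, norm_neg]
  rw [habs, UnitAddCircle.norm_eq, abs_sub_round_eq_min, rhoT]
  rcases hxy.lt_or_eq with hlt | heq
  · rw [Int.fract_eq_self.2 ⟨abs_nonneg _, hlt⟩]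
  · simp [heq]

lemma abs_sub_le_one_of_mem_Icc {x y : ℝ} (hx : x ∈ Icc (0 : ℝ) 1) (hy : y ∈ Icc (0 : ℝ) 1) :
    |x - y| ≤ 1 :=
  abs_le.2 ⟨by linarith [hx.1, hy.2], by linarith [hx.2, hy.1]⟩

lemma comp_fract_ae_eq {α : Type*} (f : ℝ → α) :
    f ∘ Int.fract =ᵐ[volume.restrict (Icc (0 : ℝ) 1)] f := by
  rw [← Measure.restrict_congr_set Ico_ae_eq_Icc]
  filter_upwards [ae_restrict_mem measurableSet_Ico] with x hx
  rw [comp_apply, Int.fract_eq_self.2 hx]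

/-- The conditional expectation `E[ρ_T(X, Y)² | X = x]` for `Y` of density `π` on `[0, 1]`. Since
`rhoT` is the torus distance only for `|x - y| ≤ 1`, it has this meaning for `x ∈ [0, 1]`. -/
noncomputable def condMeanSqDist (π : ℝ → ℝ) (x : ℝ) : ℝ :=
  ∫ y in Icc (0 : ℝ) 1, rhoT x y ^ 2 * π y

variable {π : ℝ → ℝ}

lemma condMeanSqDist_eq_circleMeanSq {x : ℝ} (hx : x ∈ Icc (0 : ℝ) 1) :
    condMeanSqDist π x = circleMeanSq 1 (π ∘ Int.fract) x := by
  rw [circleMeanSq, intervalIntegral.integral_of_le zero_le_one, ← integral_Icc_eq_integral_Ioc]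
  refine integral_congr_ae ?_
  filter_upwards [comp_fract_ae_eq π, ae_restrict_mem measurableSet_Icc] with y hπy hy
  rw [rhoT_eq_norm (abs_sub_le_one_of_mem_Icc hx hy), hπy]

lemma condMeanSqDist_of_ae_eq_one (hπ : ∀ᵐ y ∂volume.restrict (Icc (0 : ℝ) 1), π y = 1) {x : ℝ}
    (hx : x ∈ Icc (0 : ℝ) 1) : condMeanSqDist π x = 1 / 12 := by
  calc condMeanSqDist π x = condMeanSqDist (fun _ => 1) x :=
        integral_congr_ae (hπ.mono fun y hy => by simp only [hy])
    _ = circleMeanSq 1 (fun _ => 1) x := condMeanSqDist_eq_circleMeanSq hx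
    _ = 1 / 12 := by rw [circleMeanSq_one one_pos, one_pow]

lemma integral_rhoT_sq_of_ae_eq_one (hπ : ∀ᵐ y ∂volume.restrict (Icc (0 : ℝ) 1), π y = 1) :
    ∫ x in Icc (0 : ℝ) 1, ∫ y in Icc (0 : ℝ) 1, rhoT x y ^ 2 * (π x * π y) = 1 / 12 := by
  have hinner : (fun x => ∫ y in Icc (0 : ℝ) 1, rhoT x y ^ 2 * (π x * π y))
      =ᵐ[volume.restrict (Icc 0 1)] fun _ => 1 / 12 := by
    filter_upwards [hπ, ae_restrict_mem measurableSet_Icc] with x hπx hx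
    rw [← condMeanSqDist_of_ae_eq_one hπ hx, condMeanSqDist, hπx]
    simp only [one_mul]
  rw [integral_congr_ae hinner]
  simp

lemma intervalIntegrable_comp_fract (hπ : IntegrableOn π (Icc 0 1)) (a b : ℝ) :
    IntervalIntegrable (π ∘ Int.fract) volume a b :=
  ((Int.fract_periodic ℝ).comp π).intervalIntegrable₀ one_ne_zero
    ((intervalIntegrable_iff_integrableOn_Icc_of_le zero_le_one).2
      (hπ.congr_fun_ae (comp_fract_ae_eq π).symm)) a b

lemma continuousOn_condMeanSqDist (hπ : IntegrableOn π (Icc 0 1)) :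
    ContinuousOn (condMeanSqDist π) (Icc 0 1) :=
  (continuous_circleMeanSq one_ne_zero (intervalIntegrable_comp_fract hπ 0 1)).continuousOn.congr
    fun _ hx => condMeanSqDist_eq_circleMeanSq hx

lemma ae_circleMeanSq_eq_of_condMeanSqDist_eq {c : ℝ}
    (hc : ∀ᵐ x ∂volume.restrict (Icc (0 : ℝ) 1), π x ≠ 0 → condMeanSqDist π x = c) :
    ∀ᵐ x, (π ∘ Int.fract) x ≠ 0 → circleMeanSq 1 (π ∘ Int.fract) x = c := by
  have hper : Periodic
      (fun x => (π ∘ Int.fract) x ≠ 0 → circleMeanSq 1 (π ∘ Int.fract) x = c) 1 := fun x => by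
    simp only [(Int.fract_periodic ℝ).comp π x, periodic_circleMeanSq 1 _ x]
  refine ae_of_periodic_of_ae_restrict_Ioc one_pos hper (t := 0) ?_
  rw [zero_add, Measure.restrict_congr_set Ioc_ae_eq_Icc]
  filter_upwards [hc, comp_fract_ae_eq π, ae_restrict_mem measurableSet_Icc] with x hcx hπx hx
  rwa [hπx, ← condMeanSqDist_eq_circleMeanSq hx]

theorem ae_eq_one_of_condMeanSqDist_eq (hone : ∫ x in Icc (0 : ℝ) 1, π x = 1) {c : ℝ}
    (hc : ∀ᵐ x ∂volume.restrict (Icc (0 : ℝ) 1), π x ≠ 0 → condMeanSqDist π x = c) :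
    ∀ᵐ x ∂volume.restrict (Icc (0 : ℝ) 1), π x = 1 := by
  have hπ : IntegrableOn π (Icc 0 1) := .of_integral_ne_zero (hone.trans_ne one_ne_zero)
  have hmass : ∫ y in (0 : ℝ)..1, (π ∘ Int.fract) y = 1 := by
    rw [intervalIntegral.integral_of_le zero_le_one, ← integral_Icc_eq_integral_Ioc,
      integral_congr_ae (comp_fract_ae_eq π), hone]
  have hzero_or_one := ae_eq_zero_or_mul_eq_of_circleMeanSq_eq one_pos
    ((Int.fract_periodic ℝ).comp π) (intervalIntegrable_comp_fract hπ) (hmass.trans_ne one_ne_zero)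
    (ae_circleMeanSq_eq_of_condMeanSqDist_eq hc)
  have hle : π ≤ᵐ[volume.restrict (Icc 0 1)] fun _ => 1 := by
    filter_upwards [ae_restrict_of_ae hzero_or_one, comp_fract_ae_eq π] with x hx hπx
    rw [hmass, one_mul, hπx] at hx
    rcases hx with hx | hx <;> rw [hx]
    exact zero_le_one
  exact (integral_eq_iff_of_ae_le hπ (integrable_const 1) hle).1 (by simp [hone])

end UnitTorus

section Covariance

variable {α : Type*} [MeasurableSpace α] {μ : Measure α} {π : α → ℝ}

lemma integral_cov_eq_integral_sq {k : α → α → ℝ} (hone : ∫ x, π x ∂μ = 1)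
    (hk : ∀ x, Integrable (fun y => k x y * π y) μ) (c : ℝ) :
    ∫ x, ∫ y, ∫ z, ((k x y - c) * (k x z - c)) * (π x * π y * π z) ∂μ ∂μ ∂μ
      = ∫ x, ((∫ y, k x y * π y ∂μ) - c) ^ 2 * π x ∂μ := by
  have hπ : Integrable π μ := .of_integral_ne_zero (hone.trans_ne one_ne_zero)
  have hcenter (x : α) : ∫ y, (k x y - c) * π y ∂μ = (∫ y, k x y * π y ∂μ) - c := by
    simp only [sub_mul]
    rw [integral_sub (hk x) (hπ.const_mul c), integral_const_mul, hone, mul_one]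
  have hfactor (x y z : α) : ((k x y - c) * (k x z - c)) * (π x * π y * π z)
      = π x * ((k x y - c) * π y) * ((k x z - c) * π z) := by ring
  simp only [hfactor, integral_const_mul, integral_mul_const, hcenter]
  congr with x
  ring

lemma integral_sq_sub_mul_eq_zero_iff {g : α → ℝ} {c : ℝ} (hπ : 0 ≤ᵐ[μ] π)
    (hint : Integrable (fun x => (g x - c) ^ 2 * π x) μ) :
    ∫ x, (g x - c) ^ 2 * π x ∂μ = 0 ↔ ∀ᵐ x ∂μ, π x ≠ 0 → g x = c := by
  have hnonneg : 0 ≤ᵐ[μ] fun x => (g x - c) ^ 2 * π x :=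
    hπ.mono fun x hx => mul_nonneg (sq_nonneg _) hx
  rw [integral_eq_zero_iff_of_nonneg_ae hnonneg hint]
  refine eventually_congr (.of_forall fun x => ?_)
  rw [Pi.zero_apply, mul_eq_zero, sq_eq_zero_iff, sub_eq_zero, or_iff_not_imp_right]

end Covariance

/-- For `X, Y, Z` i.i.d. on `[0,1]` with density `π` and `μ_T = E[ρ_T(X,Y)²]`, the
covariance of adjacent squared torus distances equals the variance of the conditional
expectation `E[ρ_T(X,Y)² | X]`, is nonnegative, and vanishes iff `π` is uniform. -/
theorem stmt_11 (π : ℝ → ℝ) (hmeas : Measurable π)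
    (hnonneg : ∀ x ∈ Set.Icc (0:ℝ) 1, 0 ≤ π x)
    (hone : ∫ x in Set.Icc (0:ℝ) 1, π x = 1)
    (μT : ℝ)
    (hμT : μT = ∫ x in Set.Icc (0:ℝ) 1, ∫ y in Set.Icc (0:ℝ) 1,
      rhoT x y ^ 2 * (π x * π y)) :
    let cov : ℝ := ∫ x in Set.Icc (0:ℝ) 1, ∫ y in Set.Icc (0:ℝ) 1, ∫ z in Set.Icc (0:ℝ) 1,
      ((rhoT x y ^ 2 - μT) * (rhoT x z ^ 2 - μT)) * (π x * π y * π z)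
    let condVar : ℝ := ∫ x in Set.Icc (0:ℝ) 1,
      ((∫ y in Set.Icc (0:ℝ) 1, rhoT x y ^ 2 * π y) - μT) ^ 2 * π x
    cov = condVar ∧ 0 ≤ cov ∧
      (cov = 0 ↔ ∀ᵐ x ∂(volume.restrict (Set.Icc (0:ℝ) 1)), π x = 1) := by
  intro cov condVar
  have hπ : IntegrableOn π (Icc 0 1) := .of_integral_ne_zero (hone.trans_ne one_ne_zero)
  have hcov : cov = condVar := integral_cov_eq_integral_sq hone
    (fun x => hπ.continuousOn_mul ((continuous_rhoT x).pow 2).continuousOn isCompact_Icc) μT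
  have hcondVar_nonneg : 0 ≤ condVar :=
    setIntegral_nonneg measurableSet_Icc fun x hx => mul_nonneg (sq_nonneg _) (hnonneg x hx)
  have hcondVar_zero : condVar = 0 ↔
      ∀ᵐ x ∂volume.restrict (Icc (0 : ℝ) 1), π x ≠ 0 → condMeanSqDist π x = μT :=
    integral_sq_sub_mul_eq_zero_iff (ae_restrict_of_forall_mem measurableSet_Icc hnonneg)
      (hπ.continuousOn_mul (((continuousOn_condMeanSqDist hπ).sub continuousOn_const).pow 2)
        isCompact_Icc)
  refine ⟨hcov, hcov ▸ hcondVar_nonneg, ?_⟩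
  rw [hcov, hcondVar_zero]
  refine ⟨ae_eq_one_of_condMeanSqDist_eq hone, fun huniform => ?_⟩
  filter_upwards [ae_restrict_mem measurableSet_Icc] with x hx _
  rw [condMeanSqDist_of_ae_eq_one huniform hx, hμT,
    integral_rhoT_sq_of_ae_eq_one huniform]
end
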